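/- arXiv:1704.01043 — 7 statements merged into one kernel-verified Lean document; each statement's English description precedes it below -/
import Mathlib

section
/- Assume condition SYM holds. Then for every ψ ∈ Ψ the matrix Φ_ψ is stochastic (all entries are nonnegative and every row sums to 1), so in particular Φ_ψ𝟙 = 𝟙 where 𝟙 is the all-ones vector; moreover the averaged matrix Φ is symmetric and doubly stochastic. If in addition condition BAL holds, then ⟨Φx, x⟩ ≤ 0 for every x ∈ ℝ^Ω with ⟨x, 𝟙⟩ = 0. -/
open MeasureTheory Matrix Finset

/-- The space of weight functions on `k`-tuples of spins from `Ω`. -/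
abbrev WF (Ω : Type*) (k : ℕ) := (Fin k → Ω) → ℝ

/-- `ξ = q^{-k} Σ_σ E[ψ(σ)]`. -/
noncomputable def xiP {Ω : Type*} [Fintype Ω] {k : ℕ} (P : Measure (WF Ω k)) : ℝ :=
  (∑ σ : Fin k → Ω, ∫ ψ, ψ σ ∂P) / (Fintype.card Ω : ℝ) ^ k

/-- The matrix `Φ_ψ(ω,ω') = q^{1-k} ξ^{-1} Σ_τ 1{τ_1=ω, τ_2=ω'} ψ(τ)`. -/
noncomputable def PhiMat {Ω : Type*} [Fintype Ω] [DecidableEq Ω] {k : ℕ} [NeZero k]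
    (ξ : ℝ) (ψ : WF Ω k) : Matrix Ω Ω ℝ :=
  fun ω ω' => ((Fintype.card Ω : ℝ) ^ (k - 1) * ξ)⁻¹ *
    ∑ τ : Fin k → Ω, if τ 0 = ω ∧ τ 1 = ω' then ψ τ else 0

/-- The averaged matrix `Φ = E[Φ_ψ]`. -/
noncomputable def PhiAvg {Ω : Type*} [Fintype Ω] [DecidableEq Ω] {k : ℕ} [NeZero k]
    (ξ : ℝ) (P : Measure (WF Ω k)) : Matrix Ω Ω ℝ :=
  fun ω ω' => ∫ ψ, PhiMat ξ ψ ω ω' ∂P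

/-- Condition SYM, pointwise part: members of `Ψ` have all marginal sums equal to `q^{k-1} ξ`. -/
def SYMpt {Ω : Type*} [Fintype Ω] [DecidableEq Ω] {k : ℕ} (Ψ : Set (WF Ω k)) (ξ : ℝ) : Prop :=
  ∀ ψ ∈ Ψ, ∀ i : Fin k, ∀ ω : Ω,
    (∑ τ : Fin k → Ω, if τ i = ω then ψ τ else 0) = (Fintype.card Ω : ℝ) ^ (k - 1) * ξ

/-- Condition SYM, distributional part: `P` is invariant under coordinate permutations. -/
def SYMperm {Ω : Type*} [Fintype Ω] {k : ℕ} (P : Measure (WF Ω k)) : Prop :=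
  ∀ θ : Equiv.Perm (Fin k),
    P.map (fun ψ : WF Ω k => fun σ : Fin k → Ω => ψ (σ ∘ θ)) = P

/-- The function `φ(μ) = Σ_τ E[ψ(τ)] Π_i μ(τ_i)`. -/
noncomputable def phiFun {Ω : Type*} [Fintype Ω] {k : ℕ} (P : Measure (WF Ω k)) :
    (Ω → ℝ) → ℝ :=
  fun μ => ∑ τ : Fin k → Ω, (∫ ψ, ψ τ ∂P) * ∏ i, μ (τ i)

/-- Condition BAL: `φ` is concave on the simplex and attains its maximum at the
uniform distribution. -/
def BAL {Ω : Type*} [Fintype Ω] {k : ℕ} (P : Measure (WF Ω k)) : Prop :=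
  ConcaveOn ℝ (stdSimplex ℝ Ω) (phiFun P) ∧
    ∀ μ ∈ stdSimplex ℝ Ω, phiFun P μ ≤ phiFun P (fun _ => (Fintype.card Ω : ℝ)⁻¹)

/-!
The matrix `Φ` is `Φ_f` for the mean weight function `f = E[ψ]`, which inherits the marginal
condition and, by SYM, is invariant under permutations of the coordinates. The row sums of `Φ_ψ` are
the rescaled marginals of `ψ`, which gives stochasticity, and invariance of `f` under swapping the
first two coordinates is symmetry of `Φ`.

For `x ⊥ 𝟙` the segment `t ↦ ρ̄ + t x` stays in the simplex for small `t`, so `t ↦ φ(ρ̄ + t x)` has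
a local maximum at `0`. By permutation invariance its second derivative there is
`k (k - 1) q^{2-k} ∑_τ f(τ) x(τ_1) x(τ_2)`, a positive multiple of `⟨Φ x, x⟩`.
-/

section SecondDerivative

lemma iteratedDeriv_two_nonpos_of_isLocalMax {f : ℝ → ℝ} {a : ℝ} (hf : IsLocalMax f a)
    (hc : ContinuousAt f a) : iteratedDeriv 2 f a ≤ 0 := by
  simp only [iteratedDeriv_succ, iteratedDeriv_zero]
  by_contra! hpos
  have hmin : IsLocalMin f a := isLocalMin_of_deriv_deriv_pos hpos hf.deriv_eq_zero hc
  have hconst : f =ᶠ[nhds a] fun _ => f a := by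
    filter_upwards [hf, hmin] with t hle hge using le_antisymm hle hge
  have hzero : deriv (deriv f) a = 0 := by simpa using hconst.deriv.deriv_eq
  exact hpos.ne' hzero

lemma iteratedDeriv_two_prod_add_mul {ι 𝕜 : Type*} [DecidableEq ι] [NontriviallyNormedField 𝕜]
    (s : Finset ι) (a : 𝕜) (b : ι → 𝕜) :
    iteratedDeriv 2 (fun t => ∏ i ∈ s, (a + t * b i)) 0 =
      a ^ (#s - 2) * ∑ i ∈ s, ∑ j ∈ s.erase i, b i * b j := by
  have hlin (i : ι) (t : 𝕜) : HasDerivAt (fun t => a + t * b i) (b i) t := by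
    simpa using ((hasDerivAt_id t).mul_const (b i)).const_add a
  have hprod (u : Finset ι) (t : 𝕜) : HasDerivAt (fun t => ∏ i ∈ u, (a + t * b i))
      (∑ i ∈ u, (∏ j ∈ u.erase i, (a + t * b j)) * b i) t :=
    HasDerivAt.fun_finsetProd fun i _ => hlin i t
  have hderiv : deriv (fun t => ∏ i ∈ s, (a + t * b i)) =
      fun t => ∑ i ∈ s, (∏ j ∈ s.erase i, (a + t * b j)) * b i :=
    funext fun t => (hprod s t).deriv
  simp only [iteratedDeriv_succ, iteratedDeriv_zero]
  rw [hderiv, (HasDerivAt.fun_sum fun i _ => (hprod (s.erase i) 0).mul_const (b i)).deriv,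
    mul_sum]
  refine sum_congr rfl fun i hi => ?_
  rw [sum_mul, mul_sum]
  refine sum_congr rfl fun j hj => ?_
  simp only [zero_mul, add_zero, prod_const, card_erase_of_mem hj, card_erase_of_mem hi,
    Nat.sub_sub]
  ring

end SecondDerivative

section Simplex

variable {Ω : Type*} [Fintype Ω] {μ x : Ω → ℝ}

lemma eventually_add_smul_mem_stdSimplex (hμ : μ ∈ stdSimplex ℝ Ω) (hpos : ∀ ω, 0 < μ ω)
    (hx : ∑ ω, x ω = 0) : ∀ᶠ t : ℝ in nhds 0, μ + t • x ∈ stdSimplex ℝ Ω := by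
  have hnear (ω : Ω) : ∀ᶠ t : ℝ in nhds 0, 0 < (μ + t • x) ω := by
    have hc : Continuous fun t : ℝ => (μ + t • x) ω := by fun_prop
    exact hc.continuousAt.eventually_const_lt (by simpa using hpos ω)
  filter_upwards [Filter.eventually_all.2 hnear] with t ht
  exact ⟨fun ω => (ht ω).le, by simp [sum_add_distrib, ← mul_sum, hx, hμ.2]⟩

lemma isLocalMax_add_smul_of_isLocalMaxOn_stdSimplex {β : Type*} [Preorder β] {φ : (Ω → ℝ) → β}
    (hφ : IsLocalMaxOn φ (stdSimplex ℝ Ω) μ) (hμ : μ ∈ stdSimplex ℝ Ω) (hpos : ∀ ω, 0 < μ ω)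
    (hx : ∑ ω, x ω = 0) : IsLocalMax (fun t : ℝ => φ (μ + t • x)) 0 := by
  have hc : Continuous fun t : ℝ => μ + t • x := by fun_prop
  have hlim : Filter.Tendsto (fun t : ℝ => μ + t • x) (nhds 0) (nhdsWithin μ (stdSimplex ℝ Ω)) :=
    tendsto_nhdsWithin_iff.2 ⟨by simpa using hc.tendsto 0,
      eventually_add_smul_mem_stdSimplex hμ hpos hx⟩
  simpa [IsLocalMax, IsMaxFilter] using hlim.eventually hφ

end Simplex

section PermutationInvariance

variable {ι Ω : Type*} [Fintype ι] [DecidableEq ι] [Fintype Ω]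

lemma sum_comp_perm {M : Type*} [AddCommMonoid M] (θ : Equiv.Perm ι) (F : (ι → Ω) → M) :
    ∑ τ, F (τ ∘ θ) = ∑ τ, F τ :=
  (θ.symm.arrowCongr (Equiv.refl Ω)).sum_comp F

lemma sum_mul_pair_eq_of_comp_perm {R : Type*} [NonUnitalNonAssocSemiring R] {f : (ι → Ω) → R}
    (hf : ∀ (θ : Equiv.Perm ι) τ, f (τ ∘ θ) = f τ) (g : Ω → Ω → R) {i j i' j' : ι}
    (hij : i ≠ j) (hij' : i' ≠ j') :
    ∑ τ, f τ * g (τ i) (τ j) = ∑ τ, f τ * g (τ i') (τ j') := by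
  obtain ⟨θ, hi, hj⟩ := MulAction.is_two_pretransitive_iff.1
    (Equiv.Perm.isMultiplyPretransitive ι 2) hij hij'
  rw [← sum_comp_perm θ]
  refine sum_congr rfl fun τ _ => ?_
  rw [hf, Function.comp_apply, Function.comp_apply, ← hi, ← hj]
  rfl

lemma iteratedDeriv_two_sum_mul_prod_add_mul {𝕜 : Type*} [NontriviallyNormedField 𝕜]
    {f : (ι → Ω) → 𝕜} (hf : ∀ (θ : Equiv.Perm ι) τ, f (τ ∘ θ) = f τ) {i j : ι} (hij : i ≠ j)
    (a : 𝕜) (x : Ω → 𝕜) :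
    iteratedDeriv 2 (fun t : 𝕜 => ∑ τ, f τ * ∏ l, (a + t * x (τ l))) 0 =
      a ^ (Fintype.card ι - 2) * (Fintype.card ι * (Fintype.card ι - 1 : ℕ)) *
        ∑ τ, f τ * (x (τ i) * x (τ j)) := by
  have hsmooth (τ : ι → Ω) : ContDiff 𝕜 2 fun t : 𝕜 => ∏ l, (a + t * x (τ l)) := by fun_prop
  calc iteratedDeriv 2 (fun t : 𝕜 => ∑ τ, f τ * ∏ l, (a + t * x (τ l))) 0
      = ∑ τ, f τ * iteratedDeriv 2 (fun t : 𝕜 => ∏ l, (a + t * x (τ l))) 0 := by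
        rw [iteratedDeriv_fun_sum (f := fun τ t => f τ * ∏ l, (a + t * x (τ l)))
          fun τ _ => contDiffAt_const.mul (hsmooth τ).contDiffAt]
        exact sum_congr rfl fun τ _ => iteratedDeriv_const_mul_field _ _
    _ = a ^ (Fintype.card ι - 2) *
          ∑ l, ∑ m ∈ univ.erase l, ∑ τ, f τ * (x (τ l) * x (τ m)) := by
        simp only [iteratedDeriv_two_prod_add_mul, mul_sum, card_univ]
        rw [sum_comm]
        refine sum_congr rfl fun l _ => ?_
        rw [sum_comm]
        exact sum_congr rfl fun m _ => sum_congr rfl fun τ _ => mul_left_comm _ _ _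
    _ = a ^ (Fintype.card ι - 2) *
          ∑ l, ∑ _m ∈ univ.erase l, ∑ τ, f τ * (x (τ i) * x (τ j)) := by
        refine congrArg _ (sum_congr rfl fun l _ => sum_congr rfl fun m hm => ?_)
        exact sum_mul_pair_eq_of_comp_perm hf (fun ω ω' => x ω * x ω') (ne_of_mem_erase hm).symm hij
    _ = a ^ (Fintype.card ι - 2) * (Fintype.card ι * (Fintype.card ι - 1 : ℕ)) *
          ∑ τ, f τ * (x (τ i) * x (τ j)) := by
        simp only [sum_const, card_erase_of_mem (mem_univ _), card_univ, nsmul_eq_mul]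
        ring

lemma sum_mul_pair_nonpos_of_isLocalMaxOn_barycenter [Nonempty Ω]
    {f : (ι → Ω) → ℝ} (hf : ∀ (θ : Equiv.Perm ι) τ, f (τ ∘ θ) = f τ)
    (hmax : IsLocalMaxOn (fun μ : Ω → ℝ => ∑ τ, f τ * ∏ l, μ (τ l)) (stdSimplex ℝ Ω)
      (stdSimplex.barycenter : stdSimplex ℝ Ω))
    {i j : ι} (hij : i ≠ j) {x : Ω → ℝ} (hx : ∑ ω, x ω = 0) :
    ∑ τ, f τ * (x (τ i) * x (τ j)) ≤ 0 := by
  have hq : (0 : ℝ) < (Fintype.card Ω : ℝ)⁻¹ := by positivity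
  have hcard : 1 < Fintype.card ι := Fintype.one_lt_card_iff.2 ⟨i, j, hij⟩
  have hline : IsLocalMax
      (fun t : ℝ => ∑ τ, f τ * ∏ l, ((Fintype.card Ω : ℝ)⁻¹ + t * x (τ l))) 0 :=
    isLocalMax_add_smul_of_isLocalMaxOn_stdSimplex hmax (Subtype.property _) (fun _ => hq) hx
  have hderiv := iteratedDeriv_two_nonpos_of_isLocalMax hline (by fun_prop)
  rw [iteratedDeriv_two_sum_mul_prod_add_mul hf hij] at hderiv
  have hk : (0 : ℝ) < Fintype.card ι * (Fintype.card ι - 1 : ℕ) := by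
    exact_mod_cast Nat.mul_pos (by lia) (by lia)
  exact nonpos_of_mul_nonpos_right hderiv (by positivity)

end PermutationInvariance

lemma mem_doublyStochastic_of_isSymm {R n : Type*} [Fintype n] [DecidableEq n] [Semiring R]
    [PartialOrder R] [IsOrderedRing R] {M : Matrix n n R} (hM : M ∈ rowStochastic R n)
    (hsymm : M.IsSymm) : M ∈ doublyStochastic R n := by
  refine mem_doublyStochastic_iff_mem_rowStochastic_and_mem_colStochastic.2 ⟨hM, ?_⟩
  rwa [← transpose_mem_rowStochastic_iff_mem_colStochastic, hsymm.eq]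

section PhiMat

variable {Ω : Type*} [Fintype Ω] [DecidableEq Ω] {k : ℕ} [NeZero k] {ξ : ℝ} {ψ : WF Ω k}

lemma PhiMat_mulVec (ξ : ℝ) (ψ : WF Ω k) (x : Ω → ℝ) (ω : Ω) :
    (PhiMat ξ ψ *ᵥ x) ω = ((Fintype.card Ω : ℝ) ^ (k - 1) * ξ)⁻¹ *
      ∑ τ : Fin k → Ω, if τ 0 = ω then ψ τ * x (τ 1) else 0 := by
  simp only [mulVec, dotProduct, PhiMat, mul_assoc, ← mul_sum, sum_mul]
  rw [sum_comm]
  simp [ite_and, sum_ite_irrel]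

lemma PhiMat_mulVec_dotProduct (ξ : ℝ) (ψ : WF Ω k) (x : Ω → ℝ) :
    PhiMat ξ ψ *ᵥ x ⬝ᵥ x =
      ((Fintype.card Ω : ℝ) ^ (k - 1) * ξ)⁻¹ * ∑ τ, ψ τ * (x (τ 0) * x (τ 1)) := by
  simp only [dotProduct, PhiMat_mulVec, mul_assoc, ← mul_sum, sum_mul]
  rw [sum_comm]
  simp [mul_comm, mul_left_comm]

lemma PhiMat_mem_rowStochastic (hξ : 0 < ξ) (hψ : ∀ τ, 0 ≤ ψ τ)
    (hmarg : ∀ ω, (∑ τ : Fin k → Ω, if τ 0 = ω then ψ τ else 0) =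
      (Fintype.card Ω : ℝ) ^ (k - 1) * ξ) :
    PhiMat ξ ψ ∈ rowStochastic ℝ Ω := by
  refine mem_rowStochastic.2 ⟨fun ω ω' => ?_, funext fun ω => ?_⟩
  · exact mul_nonneg (by positivity) (sum_nonneg fun τ _ => ite_nonneg (hψ τ) le_rfl)
  · have : Nonempty Ω := ⟨ω⟩
    simp only [PhiMat_mulVec, Pi.one_apply, mul_one, hmarg]
    exact inv_mul_cancel₀ (by positivity)

lemma PhiMat_isSymm (ξ : ℝ) (hψ : ∀ τ, ψ (τ ∘ Equiv.swap 0 1) = ψ τ) : (PhiMat ξ ψ).IsSymm := by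
  ext ω ω'
  simp only [transpose_apply, PhiMat]
  rw [← sum_comp_perm (Equiv.swap 0 1)]
  simp [hψ, and_comm]

end PhiMat

/-- The mean weight function `τ ↦ E[ψ(τ)]`, the weight function whose matrix is `Φ` and whose
partition function is `φ`. -/
noncomputable def meanWeight {Ω : Type*} {k : ℕ} (P : Measure (WF Ω k)) : WF Ω k :=
  fun τ => ∫ ψ, ψ τ ∂P

section MeanWeight

variable {Ω : Type*} [Fintype Ω] {k : ℕ} {P : Measure (WF Ω k)}

lemma SYMperm.meanWeight_comp_perm (hP : SYMperm P) (θ : Equiv.Perm (Fin k)) (τ : Fin k → Ω) :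
    meanWeight P (τ ∘ θ) = meanWeight P τ := by
  have hmeas : Measurable fun (ψ : WF Ω k) (σ : Fin k → Ω) => ψ (σ ∘ θ) := by fun_prop
  have hmap := integral_map (μ := P) hmeas.aemeasurable
    (measurable_pi_apply τ).aestronglyMeasurable
  rw [hP θ] at hmap
  exact hmap.symm

lemma integral_sum_ite_eq_sum_ite_meanWeight (hint : ∀ τ, Integrable (fun ψ : WF Ω k => ψ τ) P)
    (p : (Fin k → Ω) → Prop) [DecidablePred p] :
    ∫ ψ, (∑ τ, if p τ then ψ τ else 0) ∂P = ∑ τ, if p τ then meanWeight P τ else 0 := by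
  simp only [← sum_filter]
  exact integral_finsetSum _ fun τ _ => hint τ

variable [DecidableEq Ω]

lemma PhiAvg_eq_PhiMat_meanWeight [NeZero k] (hint : ∀ τ, Integrable (fun ψ : WF Ω k => ψ τ) P)
    (ξ : ℝ) : PhiAvg ξ P = PhiMat ξ (meanWeight P) := by
  ext ω ω'
  simp only [PhiAvg, PhiMat, integral_const_mul, integral_sum_ite_eq_sum_ite_meanWeight hint]

end MeanWeight

namespace SYMpt

variable {Ω : Type*} [Fintype Ω] [DecidableEq Ω] {k : ℕ} {Ψ : Set (WF Ω k)} {ξ : ℝ}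

lemma le_card_pow_mul [NeZero k] (hΨ : SYMpt Ψ ξ) {ψ : WF Ω k} (hψ : ψ ∈ Ψ)
    (hnonneg : ∀ τ, 0 ≤ ψ τ) (τ : Fin k → Ω) : ψ τ ≤ (Fintype.card Ω : ℝ) ^ (k - 1) * ξ := by
  rw [← hΨ ψ hψ 0 (τ 0), ← sum_filter]
  exact single_le_sum (fun σ _ => hnonneg σ) (by simp)

lemma pos [Nonempty Ω] [NeZero k] (hΨ : SYMpt Ψ ξ) {ψ : WF Ω k} (hψ : ψ ∈ Ψ)
    (hpos : ∀ τ, 0 < ψ τ) : 0 < ξ := by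
  have hle := hΨ.le_card_pow_mul hψ (fun τ => (hpos τ).le) (Classical.arbitrary _)
  exact pos_of_mul_pos_right ((hpos _).trans_le hle) (by positivity)

variable {P : Measure (WF Ω k)}

lemma integrable_apply [NeZero k] [IsFiniteMeasure P] (hΨ : SYMpt Ψ ξ)
    (hnonneg : ∀ ψ ∈ Ψ, ∀ τ, 0 ≤ ψ τ) (hPΨ : ∀ᵐ ψ ∂P, ψ ∈ Ψ) (τ : Fin k → Ω) :
    Integrable (fun ψ : WF Ω k => ψ τ) P := by
  refine Integrable.of_bound (measurable_pi_apply τ).aestronglyMeasurable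
    ((Fintype.card Ω : ℝ) ^ (k - 1) * ξ) ?_
  filter_upwards [hPΨ] with ψ hψ
  rw [Real.norm_of_nonneg (hnonneg ψ hψ τ)]
  exact hΨ.le_card_pow_mul hψ (hnonneg ψ hψ) τ

lemma singleton_meanWeight [IsProbabilityMeasure P] (hΨ : SYMpt Ψ ξ)
    (hint : ∀ τ, Integrable (fun ψ : WF Ω k => ψ τ) P) (hPΨ : ∀ᵐ ψ ∂P, ψ ∈ Ψ) :
    SYMpt {meanWeight P} ξ := by
  rintro _ rfl i ω
  rw [← integral_sum_ite_eq_sum_ite_meanWeight hint,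
    integral_congr_ae (hPΨ.mono fun ψ hψ => hΨ ψ hψ i ω)]
  simp

end SYMpt

lemma BAL.isLocalMaxOn {Ω : Type*} [Fintype Ω] [Nonempty Ω] {k : ℕ} {P : Measure (WF Ω k)}
    (hP : BAL P) :
    IsLocalMaxOn (phiFun P) (stdSimplex ℝ Ω) (stdSimplex.barycenter : stdSimplex ℝ Ω) :=
  IsMaxOn.localize hP.2

theorem stmt0_general {Ω : Type*} [Fintype Ω] [DecidableEq Ω] [Nonempty Ω]
    {k : ℕ} [NeZero k] (hk : 2 ≤ k)
    {Ψ : Set (WF Ω k)} {P : Measure (WF Ω k)} [IsProbabilityMeasure P] {ξ : ℝ} (hξ : 0 < ξ)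
    (hnonneg : ∀ ψ ∈ Ψ, ∀ τ, 0 ≤ ψ τ) (hPΨ : ∀ᵐ ψ ∂P, ψ ∈ Ψ)
    (hpt : SYMpt Ψ ξ) (hperm : SYMperm P) :
    (∀ ψ ∈ Ψ,
      (∀ ω ω', 0 ≤ PhiMat ξ ψ ω ω') ∧
      (∀ ω, ∑ ω', PhiMat ξ ψ ω ω' = 1) ∧
      (PhiMat ξ ψ).mulVec (fun _ => 1) = fun _ => 1) ∧
    (PhiAvg ξ P).IsSymm ∧
    (∀ ω ω', 0 ≤ PhiAvg ξ P ω ω') ∧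
    (∀ ω, ∑ ω', PhiAvg ξ P ω ω' = 1) ∧
    (∀ ω', ∑ ω, PhiAvg ξ P ω ω' = 1) ∧
    (IsLocalMaxOn (phiFun P) (stdSimplex ℝ Ω) (stdSimplex.barycenter : stdSimplex ℝ Ω) →
      ∀ x : Ω → ℝ, (∑ ω, x ω = 0) → (PhiAvg ξ P).mulVec x ⬝ᵥ x ≤ 0) := by
  have hint := hpt.integrable_apply hnonneg hPΨ
  have hrow (ψ) (hψ : ψ ∈ Ψ) : PhiMat ξ ψ ∈ rowStochastic ℝ Ω :=
    PhiMat_mem_rowStochastic hξ (hnonneg ψ hψ) (hpt ψ hψ 0)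
  rw [PhiAvg_eq_PhiMat_meanWeight hint]
  have hsymm : (PhiMat ξ (meanWeight P)).IsSymm :=
    PhiMat_isSymm ξ (hperm.meanWeight_comp_perm _)
  have hmean (τ) : 0 ≤ meanWeight P τ :=
    integral_nonneg_of_ae (hPΨ.mono fun ψ hψ => hnonneg ψ hψ τ)
  have hdoubly : PhiMat ξ (meanWeight P) ∈ doublyStochastic ℝ Ω :=
    mem_doublyStochastic_of_isSymm
      (PhiMat_mem_rowStochastic hξ hmean (hpt.singleton_meanWeight hint hPΨ _ rfl 0)) hsymm
  refine ⟨fun ψ hψ => ⟨fun _ _ => nonneg_of_mem_rowStochastic (hrow ψ hψ),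
    sum_row_of_mem_rowStochastic (hrow ψ hψ), one_vecMul_of_mem_rowStochastic (hrow ψ hψ)⟩, hsymm,
    fun _ _ => nonneg_of_mem_doublyStochastic hdoubly, sum_row_of_mem_doublyStochastic hdoubly,
    sum_col_of_mem_doublyStochastic hdoubly, fun hmax x hx => ?_⟩
  have h01 : (0 : Fin k) ≠ 1 := by simp [Fin.ext_iff, Nat.mod_eq_of_lt hk]
  rw [PhiMat_mulVec_dotProduct]
  exact mul_nonpos_of_nonneg_of_nonpos (by positivity)
    (sum_mul_pair_nonpos_of_isLocalMaxOn_barycenter hperm.meanWeight_comp_perm hmax h01 hx)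

/-- Lemma "Lemma_Phi": under SYM every `Φ_ψ`, `ψ ∈ Ψ`, is a stochastic
matrix, so `Φ_ψ 𝟙 = 𝟙`; the averaged matrix `Φ` is symmetric and doubly stochastic;
and if moreover BAL holds then `⟨Φ x, x⟩ ≤ 0` whenever `x ⊥ 𝟙`. -/
theorem stmt0 {Ω : Type*} [Fintype Ω] [DecidableEq Ω] [Nonempty Ω]
    {k : ℕ} [NeZero k] (hk : 2 ≤ k)
    (Ψ : Set (WF Ω k)) (P : Measure (WF Ω k)) [IsProbabilityMeasure P]
    (hΨval : ∀ ψ ∈ Ψ, ∀ τ, ψ τ ∈ Set.Ioo (0 : ℝ) 2)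
    (hPΨ : ∀ᵐ ψ ∂P, ψ ∈ Ψ)
    (hSYM : SYMpt Ψ (xiP P) ∧ SYMperm P) :
    (∀ ψ ∈ Ψ,
      (∀ ω ω', 0 ≤ PhiMat (xiP P) ψ ω ω') ∧
      (∀ ω, ∑ ω', PhiMat (xiP P) ψ ω ω' = 1) ∧
      (PhiMat (xiP P) ψ).mulVec (fun _ => 1) = fun _ => 1) ∧
    (PhiAvg (xiP P) P).IsSymm ∧
    (∀ ω ω', 0 ≤ PhiAvg (xiP P) P ω ω') ∧
    (∀ ω, ∑ ω', PhiAvg (xiP P) P ω ω' = 1) ∧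
    (∀ ω', ∑ ω, PhiAvg (xiP P) P ω ω' = 1) ∧
    (BAL P → ∀ x : Ω → ℝ, (∑ ω, x ω = 0) →
      (PhiAvg (xiP P) P).mulVec x ⬝ᵥ x ≤ 0) := by
  obtain ⟨ψ₀, hψ₀⟩ := hPΨ.exists
  have hξ := hSYM.1.pos hψ₀ fun τ => (hΨval ψ₀ hψ₀ τ).1
  obtain ⟨hrow, hsymm, hnonneg, hsum, hsum', hneg⟩ :=
    stmt0_general hk hξ (fun ψ hψ τ => (hΨval ψ hψ τ).1.le) hPΨ hSYM.1 hSYM.2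
  exact ⟨hrow, hsymm, hnonneg, hsum, hsum', fun hBAL => hneg hBAL.isLocalMaxOn⟩
end

section
/- Assume conditions SYM and BAL hold and that q ≥ 2. Let Eig[Ξ] = {λ ∈ ℝ : Ξx = λx for some x ∈ ℰ \ {0}} (a nonempty finite set, since Ξ is self-adjoint and leaves the nonzero subspace ℰ invariant) and set λ̂ = max Eig[Ξ]. Then λ̂ ≥ −min Eig[Ξ], and there exist an orthonormal basis u_1,…,u_{q−1} of the orthogonal complement of 𝟙 in ℝ^Ω and real numbers λ̄_1,…,λ̄_{q−1} ≥ 0 such that the vector Σ = Σ_{i=1}^{q−1} λ̄_i·u_i⊗u_i ∈ ℝ^Ω⊗ℝ^Ω is a unit vector satisfying ΞΣ = λ̂Σ. -/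
open MeasureTheory Matrix Finset

/-- The operator `Ξ = E[Φ_ψ ⊗ Φ_ψ]` on `ℝ^Ω ⊗ ℝ^Ω ≅ ℝ^{Ω×Ω}`. -/
noncomputable def XiMat {Ω : Type*} [Fintype Ω] [DecidableEq Ω] {k : ℕ} [NeZero k]
    (ξ : ℝ) (P : Measure (WF Ω k)) : Matrix (Ω × Ω) (Ω × Ω) ℝ :=
  fun p r => ∫ ψ, PhiMat ξ ψ p.1 r.1 * PhiMat ξ ψ p.2 r.2 ∂P

/-- The subspace `ℰ = {z : ⟨z, 𝟙⊗y⟩ = ⟨z, y⊗𝟙⟩ = 0 for all y}`. -/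
def Ecal (Ω : Type*) [Fintype Ω] : Set (Ω × Ω → ℝ) :=
  {z | ∀ y : Ω → ℝ, (z ⬝ᵥ fun p => y p.2) = 0 ∧ (z ⬝ᵥ fun p => y p.1) = 0}

/-- The subspace `ℰ' = {z : ⟨z, 𝟙⊗𝟙⟩ = 0}`. -/
def Ecal' (Ω : Type*) [Fintype Ω] : Set (Ω × Ω → ℝ) :=
  {z | (z ⬝ᵥ fun _ => (1 : ℝ)) = 0}

/-- The set of eigenvalues of `Ξ` restricted to `ℰ`. -/
noncomputable def EigXiE {Ω : Type*} [Fintype Ω] [DecidableEq Ω] {k : ℕ} [NeZero k]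
    (ξ : ℝ) (P : Measure (WF Ω k)) : Set ℝ :=
  {lam : ℝ | ∃ z ∈ Ecal Ω, z ≠ 0 ∧ (XiMat ξ P).mulVec z = lam • z}

/- Read `z ∈ ℰ` as a matrix `Z` annihilated by `𝟙` on both sides, with singular value decomposition
`Z = ∑ sᵢ vᵢ ⊗ uᵢ`. Expanding `⟨Z, ΞZ⟩ = ∑ sᵢ sⱼ E[⟨vᵢ, Φ_ψ vⱼ⟩ ⟨uᵢ, Φ_ψ uⱼ⟩]` and applying
`|xy| ≤ (x² + y²) / 2` termwise gives `|⟨Z, ΞZ⟩| ≤ (⟨A, ΞA⟩ + ⟨B, ΞB⟩) / 2` for `A = ∑ sᵢ vᵢ ⊗ vᵢ`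
and `B = ∑ sᵢ uᵢ ⊗ uᵢ`, which lie in `ℰ` and have the same norm as `Z`. If `Z` maximises
`|⟨z, Ξz⟩|` over the unit sphere of `ℰ`, then `⟨B, ΞB⟩` equals this maximum `m`, so `B` is an
eigenvector of `Ξ` for `m`, and every eigenvalue of `Ξ` on `ℰ` lies in `[-m, m]`. -/

section QuadraticForm

variable {n : Type*} [Fintype n] (M : Matrix n n ℝ) (E : Submodule ℝ (n → ℝ))

lemma isCompact_dotProduct_self_eq_one : IsCompact {x : n → ℝ | x ∈ E ∧ x ⬝ᵥ x = 1} := by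
  refine Metric.isCompact_of_isClosed_isBounded ?_ ?_
  · exact E.closed_of_finiteDimensional.inter
      (isClosed_eq (by simp only [dotProduct]; fun_prop) continuous_const)
  · refine isBounded_iff_forall_norm_le.2 ⟨1, fun x hx => ?_⟩
    refine (pi_norm_le_iff_of_nonneg zero_le_one).2 fun i => ?_
    rw [Real.norm_eq_abs, ← sq_le_one_iff_abs_le_one, sq, ← hx.2]
    exact single_le_sum (f := fun j => x j * x j) (fun j _ => mul_self_nonneg _) (mem_univ i)

variable {E}

lemma dotProduct_self_pos_of_ne_zero {x : n → ℝ} (hx : x ≠ 0) : 0 < x ⬝ᵥ x := by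
  simpa using dotProduct_star_self_pos_iff.2 hx

lemma exists_smul_dotProduct_self_eq_one {x : n → ℝ} (hx : x ≠ 0) :
    ∃ t : ℝ, (t • x) ⬝ᵥ (t • x) = 1 := by
  have hpos := dotProduct_self_pos_of_ne_zero hx
  refine ⟨(√(x ⬝ᵥ x))⁻¹, ?_⟩
  rw [smul_dotProduct, dotProduct_smul, smul_smul, smul_eq_mul, ← mul_inv,
    Real.mul_self_sqrt hpos.le, inv_mul_cancel₀ hpos.ne']

lemma exists_maximizer_abs_dotProduct_mulVec (hE : E ≠ ⊥) :
    ∃ x ∈ E, x ⬝ᵥ x = 1 ∧ ∀ z ∈ E, |z ⬝ᵥ M *ᵥ z| ≤ |x ⬝ᵥ M *ᵥ x| * (z ⬝ᵥ z) := by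
  obtain ⟨y, hyE, hy⟩ := E.exists_mem_ne_zero_of_ne_bot hE
  obtain ⟨r, hr⟩ := exists_smul_dotProduct_self_eq_one hy
  have hcont : Continuous fun z : n → ℝ => |z ⬝ᵥ M *ᵥ z| := by
    simp only [dotProduct, mulVec]
    fun_prop
  obtain ⟨x, ⟨hxE, hx⟩, hmax⟩ := (isCompact_dotProduct_self_eq_one E).exists_isMaxOn
    ⟨r • y, E.smul_mem r hyE, hr⟩ hcont.continuousOn
  refine ⟨x, hxE, hx, fun z hz => ?_⟩
  rcases eq_or_ne z 0 with rfl | hz0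
  · simp
  obtain ⟨t, ht⟩ := exists_smul_dotProduct_self_eq_one hz0
  have htz : t * t * (z ⬝ᵥ z) = 1 := by simpa [mul_assoc] using ht
  have hle : |t * t * (z ⬝ᵥ M *ᵥ z)| ≤ |x ⬝ᵥ M *ᵥ x| := by
    simpa [mulVec_smul, mul_assoc] using hmax (show t • z ∈ _ from ⟨E.smul_mem t hz, ht⟩)
  have hzz := dotProduct_self_pos_of_ne_zero hz0
  calc |z ⬝ᵥ M *ᵥ z| = |t * t * (z ⬝ᵥ M *ᵥ z)| * (z ⬝ᵥ z) := by
        rw [abs_mul, abs_mul_self, mul_right_comm, htz, one_mul]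
    _ ≤ |x ⬝ᵥ M *ᵥ x| * (z ⬝ᵥ z) := by gcongr

variable {M}

-- Cauchy–Schwarz for the form `m - M`, nonnegative on `E`, applied to `x` and `(m - M) x`.
lemma mulVec_eq_smul_of_forall_dotProduct_mulVec_le (hM : M.IsSymm)
    (hinv : ∀ z ∈ E, M *ᵥ z ∈ E) {m : ℝ} (hle : ∀ z ∈ E, z ⬝ᵥ M *ᵥ z ≤ m * (z ⬝ᵥ z))
    {x : n → ℝ} (hx : x ∈ E) (heq : x ⬝ᵥ M *ᵥ x = m * (x ⬝ᵥ x)) : M *ᵥ x = m • x := by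
  classical
  let B := (Matrix.toBilin' (m • 1 - M)).restrict E
  have hB (y z : E) : B y z = m * (y.1 ⬝ᵥ z.1) - y.1 ⬝ᵥ M *ᵥ z.1 := by
    rw [LinearMap.BilinForm.restrict_apply, LinearMap.domRestrict_apply, Matrix.toBilin'_apply',
      Matrix.sub_mulVec, Matrix.smul_mulVec, one_mulVec, dotProduct_sub, dotProduct_smul,
      smul_eq_mul]
  have hcomm (y z : n → ℝ) : y ⬝ᵥ M *ᵥ z = z ⬝ᵥ M *ᵥ y := by
    rw [dotProduct_mulVec, ← mulVec_transpose, hM.eq, dotProduct_comm]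
  have hsymm : LinearMap.IsSymm B :=
    ⟨fun y z => by rw [hB, hB, dotProduct_comm y.1, hcomm y.1, RingHom.id_apply]⟩
  let y : E := ⟨m • x - M *ᵥ x, E.sub_mem (E.smul_mem m hx) (hinv x hx)⟩
  have hxy : B ⟨x, hx⟩ y = y.1 ⬝ᵥ y.1 := by
    rw [hB, hcomm x, dotProduct_comm x, ← smul_eq_mul, ← dotProduct_smul, ← dotProduct_sub]
  have hCS := B.apply_sq_le_of_symm (fun z => by linarith [hB z z, hle z z.2]) hsymm ⟨x, hx⟩ y
  have hyy : y.1 ⬝ᵥ y.1 = 0 := by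
    rw [hxy, hB, heq, sub_self, zero_mul] at hCS
    exact pow_eq_zero_iff two_ne_zero |>.1 (hCS.antisymm (sq_nonneg _))
  exact (sub_eq_zero.1 (dotProduct_self_eq_zero.1 hyy)).symm

lemma abs_le_of_mulVec_eq_smul {z : n → ℝ} {m lam : ℝ}
    (hle : |z ⬝ᵥ M *ᵥ z| ≤ m * (z ⬝ᵥ z)) (hz : z ≠ 0) (heig : M *ᵥ z = lam • z) : |lam| ≤ m := by
  have hpos := dotProduct_self_pos_of_ne_zero hz
  rw [heig, dotProduct_smul, smul_eq_mul, abs_mul, abs_of_pos hpos] at hle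
  exact le_of_mul_le_mul_right hle hpos

end QuadraticForm

section SumZeroBasis

open Module in
lemma exists_orthonormalBasis_orthogonal_map {E G : Type*} [NormedAddCommGroup E]
    [InnerProductSpace ℝ E] [FiniteDimensional ℝ E] [NormedAddCommGroup G] [InnerProductSpace ℝ G]
    [FiniteDimensional ℝ G] {n : ℕ} (hn : finrank ℝ E = n) (T : E →ₗ[ℝ] G) :
    ∃ u : OrthonormalBasis (Fin n) ℝ E, Pairwise fun i j => inner ℝ (T (u i)) (T (u j)) = 0 := by
  have hT := T.isSymmetric_adjoint_comp_self
  refine ⟨hT.eigenvectorBasis hn, fun i j hij => ?_⟩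
  beta_reduce
  rw [← LinearMap.adjoint_inner_right, ← LinearMap.comp_apply, hT.apply_eigenvectorBasis,
    inner_smul_right, (hT.eigenvectorBasis hn).inner_eq_zero hij, mul_zero]

variable {Ω ι : Type*} [Fintype Ω] [Fintype ι] [DecidableEq ι]

/-- The family `u` is an orthonormal basis of the orthogonal complement of the all-ones vector;
completeness is encoded as the expansion formula `eq_sum`. -/
structure IsSumZeroBasis (u : ι → Ω → ℝ) : Prop where
  dotProduct_eq : ∀ i j, u i ⬝ᵥ u j = if i = j then 1 else 0
  sum_eq_zero : ∀ i, ∑ ω, u i ω = 0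
  eq_sum : ∀ x : Ω → ℝ, ∑ ω, x ω = 0 → x = ∑ i, (x ⬝ᵥ u i) • u i

lemma exists_isSumZeroBasis_orthogonal_mulVec [Nonempty Ω] {m : Type*} [Fintype m]
    (Z : Matrix m Ω ℝ) :
    ∃ u : Fin (Fintype.card Ω - 1) → Ω → ℝ, IsSumZeroBasis u ∧
      Pairwise fun i j => Z *ᵥ u i ⬝ᵥ Z *ᵥ u j = 0 := by
  classical
  let e : EuclideanSpace ℝ Ω := WithLp.toLp 2 1
  let V : Submodule ℝ (EuclideanSpace ℝ Ω) := (ℝ ∙ e)ᗮ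
  have hV (x : EuclideanSpace ℝ Ω) : x ∈ V ↔ ∑ ω, x ω = 0 := by
    simp [V, e, Submodule.mem_orthogonal_singleton_iff_inner_right, PiLp.inner_apply]
  have hdim : Module.finrank ℝ V = Fintype.card Ω - 1 := by
    have he : e ≠ 0 := by simp [e]
    have : Fact (Module.finrank ℝ (EuclideanSpace ℝ Ω) = Fintype.card Ω - 1 + 1) :=
      ⟨by simp [Nat.sub_add_cancel Fintype.card_pos]⟩
    exact Submodule.finrank_orthogonal_span_singleton he
  obtain ⟨b, hb⟩ := exists_orthonormalBasis_orthogonal_map hdim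
    (Matrix.toEuclideanLin Z ∘ₗ V.subtype)
  refine ⟨fun i => (b i).1, ⟨fun i j => ?_, fun i => (hV _).1 (b i).2, fun x hx => ?_⟩,
    fun i j hij => ?_⟩
  · rw [← orthonormal_iff_ite.1 b.orthonormal i j, dotProduct_comm]
    simp [EuclideanSpace.inner_eq_star_dotProduct]
  · let y : V := ⟨WithLp.toLp 2 x, (hV _).2 hx⟩
    have hy := congrArg (fun v : V => v.1.ofLp) (b.sum_repr' y)
    simpa [y, EuclideanSpace.inner_eq_star_dotProduct] using hy.symm
  · simpa [EuclideanSpace.inner_eq_star_dotProduct] using hb hij.symm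

end SumZeroBasis

section Tensor

variable {Ω ι : Type*} [Fintype ι]

/-- The pure tensor `a ⊗ b`, with `ℝ^Ω ⊗ ℝ^Ω` encoded as functions on `Ω × Ω`. -/
def pureTensor (a b : Ω → ℝ) : Ω × Ω → ℝ := fun p => a p.1 * b p.2

/-- The tensor `∑ i, s i • a i ⊗ b i`, written in coordinates so that `tensorSum s u u` is
definitionally the vector `Σ` of the theorem. Singular value decompositions take this form. -/
def tensorSum (s : ι → ℝ) (a b : ι → Ω → ℝ) : Ω × Ω → ℝ :=
  fun p => ∑ i, s i * a i p.1 * b i p.2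

lemma one_pureTensor (y : Ω → ℝ) : pureTensor 1 y = fun p => y p.2 :=
  funext fun _ => one_mul _

lemma pureTensor_one (y : Ω → ℝ) : pureTensor y 1 = fun p => y p.1 :=
  funext fun _ => mul_one _

lemma tensorSum_eq_sum_smul (s : ι → ℝ) (a b : ι → Ω → ℝ) :
    tensorSum s a b = ∑ i, s i • pureTensor (a i) (b i) := by
  ext p
  simp [tensorSum, pureTensor, mul_assoc]

variable [Fintype Ω]

/-- The space `ℰ`, that is the set `Ecal Ω`, as a linear subspace; quadratic forms are maximised
over its unit sphere. -/
def ecalSubmodule (Ω : Type*) [Fintype Ω] : Submodule ℝ (Ω × Ω → ℝ) where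
  carrier := Ecal Ω
  zero_mem' := by simp [Ecal]
  add_mem' h₁ h₂ y := by simp [h₁ y, h₂ y]
  smul_mem' c z hz y := by simp [hz y]

lemma pureTensor_dotProduct (a b a' b' : Ω → ℝ) :
    pureTensor a b ⬝ᵥ pureTensor a' b' = (a ⬝ᵥ a') * (b ⬝ᵥ b') := by
  simp only [dotProduct, pureTensor, Fintype.sum_prod_type, sum_mul_sum, mul_mul_mul_comm]

lemma tensorSum_dotProduct_mulVec (M : Matrix (Ω × Ω) (Ω × Ω) ℝ) (s : ι → ℝ)
    (a b : ι → Ω → ℝ) :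
    tensorSum s a b ⬝ᵥ M *ᵥ tensorSum s a b =
      ∑ i, ∑ j, s i * s j * (pureTensor (a i) (b i) ⬝ᵥ M *ᵥ pureTensor (a j) (b j)) := by
  simp only [tensorSum_eq_sum_smul, mulVec_sum, mulVec_smul, sum_dotProduct, dotProduct_sum,
    smul_dotProduct, dotProduct_smul, smul_eq_mul, mul_sum, mul_assoc]
  exact sum_comm.trans (sum_congr rfl fun i _ => sum_congr rfl fun j _ => mul_left_comm _ _ _)

lemma pureTensor_mem_ecalSubmodule {a b : Ω → ℝ} (ha : ∑ ω, a ω = 0) (hb : ∑ ω, b ω = 0) :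
    pureTensor a b ∈ ecalSubmodule Ω := by
  intro y
  rw [← one_pureTensor, ← pureTensor_one, pureTensor_dotProduct, pureTensor_dotProduct,
    dotProduct_one, dotProduct_one, ha, hb, zero_mul, mul_zero]
  exact ⟨rfl, rfl⟩

lemma tensorSum_mem_ecalSubmodule (s : ι → ℝ) {a b : ι → Ω → ℝ} (ha : ∀ i, ∑ ω, a i ω = 0)
    (hb : ∀ i, ∑ ω, b i ω = 0) : tensorSum s a b ∈ ecalSubmodule Ω := by
  rw [tensorSum_eq_sum_smul]
  exact sum_mem fun i _ =>
    Submodule.smul_mem _ _ (pureTensor_mem_ecalSubmodule (ha i) (hb i))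

lemma ecalSubmodule_ne_bot [Nontrivial Ω] : ecalSubmodule Ω ≠ ⊥ := by
  classical
  obtain ⟨a, b, hab⟩ := exists_pair_ne Ω
  let v : Ω → ℝ := Pi.single a 1 - Pi.single b 1
  have hv : ∑ ω, v ω = 0 := by simp [v]
  have hva : pureTensor v v (a, a) = 1 := by simp [pureTensor, v, hab]
  refine (Submodule.ne_bot_iff _).2 ⟨_, pureTensor_mem_ecalSubmodule hv hv, fun h => ?_⟩
  simp [h] at hva

lemma sum_left_eq_zero_of_mem_ecalSubmodule {z : Ω × Ω → ℝ} (hz : z ∈ ecalSubmodule Ω) (b : Ω) :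
    ∑ a, z (a, b) = 0 := by
  classical
  simpa [dotProduct, Fintype.sum_prod_type, Pi.single_apply] using (hz (Pi.single b 1)).1

lemma sum_right_eq_zero_of_mem_ecalSubmodule {z : Ω × Ω → ℝ} (hz : z ∈ ecalSubmodule Ω) (a : Ω) :
    ∑ b, z (a, b) = 0 := by
  classical
  simpa [dotProduct, Fintype.sum_prod_type_right, Pi.single_apply] using (hz (Pi.single a 1)).2

end Tensor

section SingularValues

variable {Ω ι : Type*} [Fintype Ω] [DecidableEq ι]

/-- The family `a` is orthonormal on the support of the coefficients `s`; nothing is required of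
`a i` when `s i = 0`. This is what the left singular vectors `(s i)⁻¹ • Z u i` satisfy, since
`(0 : ℝ)⁻¹ = 0`. -/
def OrthonormalOnSupport (s : ι → ℝ) (a : ι → Ω → ℝ) : Prop :=
  ∀ i j, s i * (a i ⬝ᵥ a j) = if i = j then s i else 0

lemma sqrt_dotProduct_self_smul_inv_smul (w : Ω → ℝ) : √(w ⬝ᵥ w) • (√(w ⬝ᵥ w))⁻¹ • w = w := by
  rcases eq_or_ne w 0 with rfl | hw
  · simp
  · exact smul_inv_smul₀ (Real.sqrt_pos.2 (dotProduct_self_pos_of_ne_zero hw)).ne' w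

lemma orthonormalOnSupport_normalize {w : ι → Ω → ℝ} (hw : Pairwise fun i j => w i ⬝ᵥ w j = 0) :
    OrthonormalOnSupport (fun i => √(w i ⬝ᵥ w i)) fun i => (√(w i ⬝ᵥ w i))⁻¹ • w i := by
  intro i j
  rw [← smul_eq_mul, ← smul_dotProduct, sqrt_dotProduct_self_smul_inv_smul, dotProduct_smul,
    smul_eq_mul]
  split_ifs with h
  · rw [← h, inv_mul_eq_div, Real.div_sqrt]
  · rw [hw h, mul_zero]

lemma IsSumZeroBasis.orthonormalOnSupport [Fintype ι] {u : ι → Ω → ℝ} (hu : IsSumZeroBasis u)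
    (s : ι → ℝ) : OrthonormalOnSupport s u := by
  intro i j
  rw [hu.dotProduct_eq, mul_ite, mul_one, mul_zero]

lemma OrthonormalOnSupport.tensorSum_dotProduct_self [Fintype ι] {s : ι → ℝ} {a b : ι → Ω → ℝ}
    (ha : OrthonormalOnSupport s a) (hb : OrthonormalOnSupport s b) :
    tensorSum s a b ⬝ᵥ tensorSum s a b = ∑ i, s i ^ 2 := by
  have hterm (i j : ι) : s i * s j * ((a i ⬝ᵥ a j) * (b i ⬝ᵥ b j)) =
      if i = j then s i ^ 2 else 0 := by
    rw [dotProduct_comm (b i), mul_mul_mul_comm, ha i j, hb j i]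
    by_cases h : i = j <;> simp [h, Ne.symm, sq]
  calc tensorSum s a b ⬝ᵥ tensorSum s a b
      = ∑ i, ∑ j, s i * s j * ((a i ⬝ᵥ a j) * (b i ⬝ᵥ b j)) := by
        classical
        simpa [pureTensor_dotProduct] using tensorSum_dotProduct_mulVec 1 s a b
    _ = ∑ i, s i ^ 2 := by simp [hterm]

lemma exists_eq_tensorSum_of_mem_ecalSubmodule [Nonempty Ω] {z : Ω × Ω → ℝ}
    (hz : z ∈ ecalSubmodule Ω) :
    ∃ (u v : Fin (Fintype.card Ω - 1) → Ω → ℝ) (s : Fin (Fintype.card Ω - 1) → ℝ),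
      IsSumZeroBasis u ∧ (∀ i, ∑ ω, v i ω = 0) ∧ OrthonormalOnSupport s v ∧ (∀ i, 0 ≤ s i) ∧
        z = tensorSum s v u := by
  let Z : Matrix Ω Ω ℝ := .of fun a b => z (a, b)
  obtain ⟨u, hu, horth⟩ := exists_isSumZeroBasis_orthogonal_mulVec Z
  let s i := √(Z *ᵥ u i ⬝ᵥ Z *ᵥ u i)
  let v i := (s i)⁻¹ • Z *ᵥ u i
  have hsv (i) : s i • v i = Z *ᵥ u i := sqrt_dotProduct_self_smul_inv_smul (Z *ᵥ u i)
  refine ⟨u, v, s, hu, fun i => ?_, orthonormalOnSupport_normalize horth,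
    fun i => Real.sqrt_nonneg _, ?_⟩
  · have hcol : ∑ ω, (Z *ᵥ u i) ω = 0 := by
      simp only [mulVec, dotProduct]
      rw [sum_comm]
      simp [← sum_mul, Z, sum_left_eq_zero_of_mem_ecalSubmodule hz]
    simp [v, ← mul_sum, hcol]
  · ext ⟨a, b⟩
    have hrow := hu.eq_sum (fun b => z (a, b)) (sum_right_eq_zero_of_mem_ecalSubmodule hz a)
    calc z (a, b) = (∑ i, (Z *ᵥ u i) a • u i) b := congrFun hrow b
      _ = tensorSum s v u (a, b) := by simp [tensorSum, ← hsv]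

end SingularValues

section KroneckerSquare

variable {Ω S : Type*} [MeasurableSpace S] {μ : Measure S} {F : S → Matrix Ω Ω ℝ}

/-- The expected Kronecker square `E[F ⊗ F]` of a random matrix `F`. Entries whose defining product
is not integrable are `0`. The operator `XiMat ξ P` is the case `F = PhiMat ξ`. -/
noncomputable def expectedKroneckerSquare (F : S → Matrix Ω Ω ℝ) (μ : Measure S) :
    Matrix (Ω × Ω) (Ω × Ω) ℝ :=
  fun p r => ∫ s, F s p.1 r.1 * F s p.2 r.2 ∂μ

lemma expectedKroneckerSquare_isSymm {T : S → S} (hT : MeasurePreserving T μ μ)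
    (hF : ∀ a b, AEStronglyMeasurable (fun s => F s a b) μ) (hFT : ∀ s, F (T s) = (F s)ᵀ) :
    (expectedKroneckerSquare F μ).IsSymm := by
  ext p r
  have hmeas : AEStronglyMeasurable (fun s => F s r.1 p.1 * F s r.2 p.2) (μ.map T) := by
    rw [hT.map_eq]
    exact (hF _ _).mul (hF _ _)
  calc ∫ s, F s r.1 p.1 * F s r.2 p.2 ∂μ
      = ∫ s, F (T s) r.1 p.1 * F (T s) r.2 p.2 ∂μ := by
        rw [← integral_map hT.aemeasurable hmeas, hT.map_eq]
    _ = ∫ s, F s p.1 r.1 * F s p.2 r.2 ∂μ := by simp only [hFT, transpose_apply]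

variable [Fintype Ω]

lemma memLp_vecMul {p : ENNReal} (hF : ∀ a b, MemLp (fun s => F s a b) p μ) (x : Ω → ℝ)
    (b : Ω) : MemLp (fun s => (x ᵥ* F s) b) p μ :=
  memLp_finsetSum _ fun a _ => (hF a b).const_mul (x a)

lemma memLp_dotProduct_mulVec {p : ENNReal} (hF : ∀ a b, MemLp (fun s => F s a b) p μ)
    (x y : Ω → ℝ) : MemLp (fun s => x ⬝ᵥ F s *ᵥ y) p μ := by
  simp only [dotProduct_mulVec]
  exact memLp_finsetSum _ fun b _ => (memLp_vecMul hF x b).mul_const (y b)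

lemma pureTensor_vecMul_expectedKroneckerSquare (hF : ∀ a b, MemLp (fun s => F s a b) 2 μ)
    (a b : Ω → ℝ) :
    pureTensor a b ᵥ* expectedKroneckerSquare F μ =
      fun r => ∫ s, pureTensor (a ᵥ* F s) (b ᵥ* F s) r ∂μ := by
  ext r
  calc (pureTensor a b ᵥ* expectedKroneckerSquare F μ) r
      = ∫ s, pureTensor a b ⬝ᵥ pureTensor (fun i => F s i r.1) (fun j => F s j r.2) ∂μ := by
        simp only [vecMul, dotProduct, expectedKroneckerSquare, ← integral_const_mul]
        exact (integral_finsetSum _ fun p _ =>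
          ((hF _ _).integrable_mul (hF _ _)).const_mul _).symm
    _ = ∫ s, pureTensor (a ᵥ* F s) (b ᵥ* F s) r ∂μ := by
        simp only [pureTensor_dotProduct]
        rfl

lemma pureTensor_dotProduct_expectedKroneckerSquare_mulVec
    (hF : ∀ a b, MemLp (fun s => F s a b) 2 μ) (a b a' b' : Ω → ℝ) :
    pureTensor a b ⬝ᵥ expectedKroneckerSquare F μ *ᵥ pureTensor a' b' =
      ∫ s, (a ⬝ᵥ F s *ᵥ a') * (b ⬝ᵥ F s *ᵥ b') ∂μ := by
  calc pureTensor a b ⬝ᵥ expectedKroneckerSquare F μ *ᵥ pureTensor a' b'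
      = ∫ s, pureTensor (a ᵥ* F s) (b ᵥ* F s) ⬝ᵥ pureTensor a' b' ∂μ := by
        rw [dotProduct_mulVec, pureTensor_vecMul_expectedKroneckerSquare hF]
        simp only [dotProduct, ← integral_mul_const]
        exact (integral_finsetSum _ fun r _ =>
          ((memLp_vecMul hF a _).integrable_mul (memLp_vecMul hF b _)).mul_const _).symm
    _ = ∫ s, (a ⬝ᵥ F s *ᵥ a') * (b ⬝ᵥ F s *ᵥ b') ∂μ := by
        simp only [pureTensor_dotProduct, dotProduct_mulVec]

lemma abs_pureTensor_dotProduct_expectedKroneckerSquare_le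
    (hF : ∀ a b, MemLp (fun s => F s a b) 2 μ) (a b a' b' : Ω → ℝ) :
    |pureTensor a b ⬝ᵥ expectedKroneckerSquare F μ *ᵥ pureTensor a' b'| ≤
      (pureTensor a a ⬝ᵥ expectedKroneckerSquare F μ *ᵥ pureTensor a' a' +
        pureTensor b b ⬝ᵥ expectedKroneckerSquare F μ *ᵥ pureTensor b' b') / 2 := by
  simp only [pureTensor_dotProduct_expectedKroneckerSquare_mulVec hF]
  let X s := a ⬝ᵥ F s *ᵥ a'
  let Y s := b ⬝ᵥ F s *ᵥ b'
  have hX : MemLp X 2 μ := memLp_dotProduct_mulVec hF a a'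
  have hY : MemLp Y 2 μ := memLp_dotProduct_mulVec hF b b'
  have hXX : Integrable (fun s => X s * X s) μ := hX.integrable_mul hX
  have hYY : Integrable (fun s => Y s * Y s) μ := hY.integrable_mul hY
  calc |∫ s, X s * Y s ∂μ| ≤ ∫ s, |X s * Y s| ∂μ := abs_integral_le_integral_abs
    _ ≤ ∫ s, (X s * X s + Y s * Y s) / 2 ∂μ := by
        refine integral_mono (hX.integrable_mul hY).abs ((hXX.add hYY).div_const 2) fun s => ?_
        exact abs_le.2 ⟨by linarith [mul_self_nonneg (X s + Y s)],
          by linarith [mul_self_nonneg (X s - Y s)]⟩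
    _ = (∫ s, X s * X s ∂μ + ∫ s, Y s * Y s ∂μ) / 2 := by
        rw [integral_div, integral_add hXX hYY]

lemma abs_tensorSum_dotProduct_expectedKroneckerSquare_le
    (hF : ∀ a b, MemLp (fun s => F s a b) 2 μ) {ι : Type*} [Fintype ι] {s : ι → ℝ}
    (hs : ∀ i, 0 ≤ s i) (a b : ι → Ω → ℝ) :
    |tensorSum s a b ⬝ᵥ expectedKroneckerSquare F μ *ᵥ tensorSum s a b| ≤
      (tensorSum s a a ⬝ᵥ expectedKroneckerSquare F μ *ᵥ tensorSum s a a +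
        tensorSum s b b ⬝ᵥ expectedKroneckerSquare F μ *ᵥ tensorSum s b b) / 2 := by
  simp only [tensorSum_dotProduct_mulVec, ← sum_add_distrib, sum_div]
  refine (abs_sum_le_sum_abs _ _).trans (sum_le_sum fun i _ => ?_)
  refine (abs_sum_le_sum_abs _ _).trans (sum_le_sum fun j _ => ?_)
  have hij : 0 ≤ s i * s j := mul_nonneg (hs i) (hs j)
  rw [abs_mul, abs_of_nonneg hij, ← mul_add, mul_div_assoc]
  exact mul_le_mul_of_nonneg_left
    (abs_pureTensor_dotProduct_expectedKroneckerSquare_le hF _ _ _ _) hij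

lemma expectedKroneckerSquare_mulVec_mem_ecalSubmodule
    (hF : ∀ a b, MemLp (fun s => F s a b) 2 μ) {c : S → ℝ}
    (hcol : ∀ᵐ s ∂μ, ∀ b, ∑ a, F s a b = c s) {z : Ω × Ω → ℝ} (hz : z ∈ ecalSubmodule Ω) :
    expectedKroneckerSquare F μ *ᵥ z ∈ ecalSubmodule Ω := by
  intro y
  have hone : ∀ᵐ s ∂μ, 1 ᵥ* F s = fun _ => c s := hcol.mono fun s hs => funext fun b => by
    rw [← hs b, vecMul, one_dotProduct]
  have hleft : pureTensor 1 y ᵥ* expectedKroneckerSquare F μ =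
      fun r => ∫ s, c s * (y ᵥ* F s) r.2 ∂μ := by
    rw [pureTensor_vecMul_expectedKroneckerSquare hF]
    exact funext fun r => integral_congr_ae <| hone.mono fun s hs => by simp only [pureTensor, hs]
  have hright : pureTensor y 1 ᵥ* expectedKroneckerSquare F μ =
      fun r => ∫ s, (y ᵥ* F s) r.1 * c s ∂μ := by
    rw [pureTensor_vecMul_expectedKroneckerSquare hF]
    exact funext fun r => integral_congr_ae <| hone.mono fun s hs => by simp only [pureTensor, hs]
  constructor
  · rw [dotProduct_comm, ← one_pureTensor, dotProduct_mulVec, hleft, dotProduct_comm]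
    exact (hz fun b => ∫ s, c s * (y ᵥ* F s) b ∂μ).1
  · rw [dotProduct_comm, ← pureTensor_one, dotProduct_mulVec, hright, dotProduct_comm]
    exact (hz fun a => ∫ s, (y ᵥ* F s) a * c s ∂μ).2

lemma exists_nonneg_tensorSum_maximizer [Nontrivial Ω]
    (hF : ∀ a b, MemLp (fun s => F s a b) 2 μ) :
    ∃ (u : Fin (Fintype.card Ω - 1) → Ω → ℝ) (s : Fin (Fintype.card Ω - 1) → ℝ),
      IsSumZeroBasis u ∧ (∀ i, 0 ≤ s i) ∧ tensorSum s u u ⬝ᵥ tensorSum s u u = 1 ∧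
        ∀ z ∈ ecalSubmodule Ω, |z ⬝ᵥ expectedKroneckerSquare F μ *ᵥ z| ≤
          (tensorSum s u u ⬝ᵥ expectedKroneckerSquare F μ *ᵥ tensorSum s u u) * (z ⬝ᵥ z) := by
  obtain ⟨x, hx, hxx, hmax⟩ := exists_maximizer_abs_dotProduct_mulVec
    (expectedKroneckerSquare F μ) (ecalSubmodule_ne_bot (Ω := Ω))
  obtain ⟨u, v, s, hu, hv, hvs, hs, rfl⟩ := exists_eq_tensorSum_of_mem_ecalSubmodule hx
  have hus := hu.orthonormalOnSupport s
  have hnorm : ∑ i, s i ^ 2 = 1 := by rw [← hxx, hvs.tensorSum_dotProduct_self hus]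
  have huu : tensorSum s u u ⬝ᵥ tensorSum s u u = 1 := by
    rw [hus.tensorSum_dotProduct_self hus, hnorm]
  have hvv : tensorSum s v v ⬝ᵥ tensorSum s v v = 1 := by
    rw [hvs.tensorSum_dotProduct_self hvs, hnorm]
  have hA := (le_abs_self _).trans (hmax _ (tensorSum_mem_ecalSubmodule s hv hv))
  have hB := (le_abs_self _).trans
    (hmax _ (tensorSum_mem_ecalSubmodule s hu.sum_eq_zero hu.sum_eq_zero))
  rw [hvv, mul_one] at hA
  rw [huu, mul_one] at hB
  have hAB := abs_tensorSum_dotProduct_expectedKroneckerSquare_le hF hs v u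
  have hBmax : tensorSum s u u ⬝ᵥ expectedKroneckerSquare F μ *ᵥ tensorSum s u u =
      |tensorSum s v u ⬝ᵥ expectedKroneckerSquare F μ *ᵥ tensorSum s v u| := by
    linarith
  exact ⟨u, s, hu, hs, huu, fun z hz => hBmax ▸ hmax z hz⟩

end KroneckerSquare

section Weights

variable {Ω : Type*} {k : ℕ} {P : Measure (WF Ω k)}

lemma memLp_eval_of_ae_mem [IsFiniteMeasure P] {Ψ : Set (WF Ω k)}
    (hΨval : ∀ ψ ∈ Ψ, ∀ τ, ψ τ ∈ Set.Ioo (0 : ℝ) 2) (hPΨ : ∀ᵐ ψ ∂P, ψ ∈ Ψ) (p : ENNReal)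
    (τ : Fin k → Ω) : MemLp (fun ψ : WF Ω k => ψ τ) p P := by
  refine MemLp.of_bound (measurable_pi_apply τ).aestronglyMeasurable 2 ?_
  filter_upwards [hPΨ] with ψ hψ
  obtain ⟨hpos, hlt⟩ := hΨval ψ hψ τ
  rw [Real.norm_of_nonneg hpos.le]
  exact hlt.le

variable [Fintype Ω] [DecidableEq Ω] [NeZero k]

lemma memLp_phiMat {p : ENNReal} (hP : ∀ τ : Fin k → Ω, MemLp (fun ψ : WF Ω k => ψ τ) p P)
    (ξ : ℝ) (a b : Ω) : MemLp (fun ψ => PhiMat ξ ψ a b) p P := by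
  have hsum : MemLp (fun ψ : WF Ω k => ∑ τ : Fin k → Ω, if τ 0 = a ∧ τ 1 = b then ψ τ else 0) p P :=
    memLp_finsetSum _ fun τ _ => by
      split_ifs
      exacts [hP τ, MemLp.zero']
  exact hsum.const_mul _

lemma phiMat_comp_swap (ξ : ℝ) (ψ : WF Ω k) :
    PhiMat ξ (fun σ => ψ (σ ∘ Equiv.swap (0 : Fin k) 1)) = (PhiMat ξ ψ)ᵀ := by
  ext a b
  simp only [PhiMat, transpose_apply]
  congr 1
  refine Fintype.sum_equiv ((Equiv.swap 0 1).arrowCongr (Equiv.refl Ω)) _ _ fun τ => ?_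
  simp [Equiv.arrowCongr, Function.comp_def, and_comm]

lemma xiMat_isSymm {ξ : ℝ} (hPhi : ∀ a b, AEStronglyMeasurable (fun ψ => PhiMat ξ ψ a b) P)
    (hP : SYMperm P) : (XiMat ξ P).IsSymm :=
  expectedKroneckerSquare_isSymm (T := fun ψ σ => ψ (σ ∘ Equiv.swap (0 : Fin k) 1))
    ⟨measurable_pi_lambda _ fun _ => measurable_pi_apply _, hP (Equiv.swap 0 1)⟩ hPhi
    (phiMat_comp_swap ξ)

lemma sum_phiMat {ξ : ℝ} {Ψ : Set (WF Ω k)} (hΨ : SYMpt Ψ ξ) {ψ : WF Ω k} (hψ : ψ ∈ Ψ) (b : Ω) :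
    ∑ a, PhiMat ξ ψ a b =
      ((Fintype.card Ω : ℝ) ^ (k - 1) * ξ)⁻¹ * ((Fintype.card Ω : ℝ) ^ (k - 1) * ξ) := by
  simp only [PhiMat]
  rw [← mul_sum, ← hΨ ψ hψ 1 b, sum_comm]
  simp [ite_and]

end Weights

theorem stmt2_general {Ω S : Type*} [Fintype Ω] [Nontrivial Ω] [MeasurableSpace S]
    {μ : Measure S} {F : S → Matrix Ω Ω ℝ} (hF : ∀ a b, MemLp (fun s => F s a b) 2 μ)
    (hsymm : (expectedKroneckerSquare F μ).IsSymm) {c : S → ℝ}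
    (hcol : ∀ᵐ s ∂μ, ∀ b, ∑ a, F s a b = c s) :
    ∃ lamhat : ℝ,
      IsGreatest {lam : ℝ | ∃ z ∈ Ecal Ω, z ≠ 0 ∧ expectedKroneckerSquare F μ *ᵥ z = lam • z}
        lamhat ∧
      (∀ lam ∈ {lam : ℝ | ∃ z ∈ Ecal Ω, z ≠ 0 ∧ expectedKroneckerSquare F μ *ᵥ z = lam • z},
        -lam ≤ lamhat) ∧
      ∃ (u : Fin (Fintype.card Ω - 1) → Ω → ℝ) (lbar : Fin (Fintype.card Ω - 1) → ℝ),
        (∀ i j, (u i ⬝ᵥ u j) = if i = j then 1 else 0) ∧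
        (∀ i, ∑ ω, u i ω = 0) ∧
        (∀ x : Ω → ℝ, (∑ ω, x ω = 0) → x = ∑ i, (x ⬝ᵥ u i) • u i) ∧
        (∀ i, 0 ≤ lbar i) ∧
        tensorSum lbar u u ⬝ᵥ tensorSum lbar u u = 1 ∧
        expectedKroneckerSquare F μ *ᵥ tensorSum lbar u u = lamhat • tensorSum lbar u u := by
  obtain ⟨u, s, hu, hs, hunit, hmax⟩ := exists_nonneg_tensorSum_maximizer hF
  have hmem := tensorSum_mem_ecalSubmodule s hu.sum_eq_zero hu.sum_eq_zero
  have heig := mulVec_eq_smul_of_forall_dotProduct_mulVec_le hsymm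
    (fun z hz => expectedKroneckerSquare_mulVec_mem_ecalSubmodule hF hcol hz)
    (fun z hz => (le_abs_self _).trans (hmax z hz)) hmem (by rw [hunit, mul_one])
  have hne : tensorSum s u u ≠ 0 := fun h => by simp [h] at hunit
  refine ⟨_, ⟨⟨_, hmem, hne, heig⟩, ?_⟩, ?_, u, s, hu.dotProduct_eq, hu.sum_eq_zero, hu.eq_sum, hs,
    hunit, heig⟩
  · rintro lam ⟨z, hz, hz0, hlam⟩
    exact (le_abs_self lam).trans (abs_le_of_mulVec_eq_smul (hmax z hz) hz0 hlam)
  · rintro lam ⟨z, hz, hz0, hlam⟩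
    exact (neg_le_abs lam).trans (abs_le_of_mulVec_eq_smul (hmax z hz) hz0 hlam)

/-- Lemma "Cor:MaxOpt": under SYM and BAL with `q ≥ 2`, the spectrum of
`Ξ|_ℰ` has a greatest element `λ̂`, which satisfies `λ̂ ≥ -min Eig[Ξ]`, and `λ̂` possesses a
unit eigenvector of the form `Σ = Σ_i λ̄_i u_i⊗u_i` with `λ̄_i ≥ 0` and `(u_i)` an
orthonormal basis of `𝟙^⊥`. -/
theorem stmt2 {Ω : Type*} [Fintype Ω] [DecidableEq Ω] [Nonempty Ω]
    {k : ℕ} [NeZero k] (hk : 2 ≤ k) (hq : 2 ≤ Fintype.card Ω)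
    (Ψ : Set (WF Ω k)) (P : Measure (WF Ω k)) [IsProbabilityMeasure P]
    (hΨval : ∀ ψ ∈ Ψ, ∀ τ, ψ τ ∈ Set.Ioo (0 : ℝ) 2)
    (hPΨ : ∀ᵐ ψ ∂P, ψ ∈ Ψ)
    (hSYM : SYMpt Ψ (xiP P) ∧ SYMperm P) (hBAL : BAL P) :
    ∃ lamhat : ℝ, IsGreatest (EigXiE (xiP P) P) lamhat ∧
      (∀ lam ∈ EigXiE (xiP P) P, -lam ≤ lamhat) ∧
      ∃ (u : Fin (Fintype.card Ω - 1) → Ω → ℝ) (lbar : Fin (Fintype.card Ω - 1) → ℝ),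
        (∀ i j, (u i ⬝ᵥ u j) = if i = j then 1 else 0) ∧
        (∀ i, ∑ ω, u i ω = 0) ∧
        (∀ x : Ω → ℝ, (∑ ω, x ω = 0) → x = ∑ i, (x ⬝ᵥ u i) • u i) ∧
        (∀ i, 0 ≤ lbar i) ∧
        ((fun p : Ω × Ω => ∑ i, lbar i * u i p.1 * u i p.2) ⬝ᵥ
          (fun p : Ω × Ω => ∑ i, lbar i * u i p.1 * u i p.2)) = 1 ∧
        (XiMat (xiP P) P).mulVec (fun p : Ω × Ω => ∑ i, lbar i * u i p.1 * u i p.2) =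
          lamhat • (fun p : Ω × Ω => ∑ i, lbar i * u i p.1 * u i p.2) := by
  have : Nontrivial Ω := Fintype.one_lt_card_iff_nontrivial.1 hq
  have hPhi := memLp_phiMat (memLp_eval_of_ae_mem hΨval hPΨ 2) (xiP P)
  exact stmt2_general hPhi (xiMat_isSymm (fun a b => (hPhi a b).aestronglyMeasurable) hSYM.2)
    (hPΨ.mono fun ψ hψ => sum_phiMat hSYM.1 hψ)
end

section
/- Assume conditions SYM and BAL hold. For n ≥ 1 and σ : {1,…,n} → Ω let ρ_σ ∈ P(Ω) denote the empirical distribution ρ_σ(ω) = |σ^{−1}(ω)|/n. Then for every D > 0 there exists c > 0 such that for all n ≥ 1 and all integers m with 0 ≤ m ≤ Dn/k: c·q^n·ξ^m ≤ Σ_{σ : {1,…,n}→Ω} φ(ρ_σ)^m ≤ q^n·ξ^m. (The middle sum equals the expected partition function E[Z(G(n,m,P))] of the random factor graph with n variable nodes and m constraint nodes whose neighborhoods and weight functions are chosen independently at random.) -/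
open MeasureTheory Matrix Finset

/-- Empirical spin distribution of an assignment `σ : {1,…,n} → Ω`. -/
noncomputable def empDist {Ω : Type*} [Fintype Ω] [DecidableEq Ω] {n : ℕ}
    (σ : Fin n → Ω) : Ω → ℝ :=
  fun ω => ((Finset.univ.filter fun i => σ i = ω).card : ℝ) / n

/-!
Let `a τ = E[ψ(τ)]`. Sampling `k` times from `ρ_σ` means evaluating `σ` at `k` uniformly random
positions, so `φ(ρ_σ)` is the average of `a (σ ∘ J)` over all `J : Fin k → Fin n`. If `J` is
injective and `σ` is uniform, then `σ ∘ J` is uniform and contributes `ξ` on average. All but a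
`k ^ 2 / n` fraction of the `J` are injective, hence `𝔼 σ, φ(ρ_σ) ≥ (1 - k ^ 2 / n) ξ`. The power
mean inequality gives `𝔼 σ, φ(ρ_σ) ^ m ≥ (𝔼 σ, φ(ρ_σ)) ^ m`, and the factor `1 - k ^ 2 / n`
costs only a constant over `m = O(n)` powers; for small `n`, where that factor may be negative,
`φ(ρ_σ) ≥ min a > 0` takes over. The upper bound holds term by term, as `φ ≤ φ(ρ̄) = ξ`.
-/

lemma sub_sq_mul_pow_le_mul_descFactorial (n k : ℕ) :
    ((n : ℝ) - k ^ 2) * n ^ k ≤ n * n.descFactorial k := by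
  induction k with
  | zero => simp
  | succ k ih =>
    rw [Nat.descFactorial_succ]
    rcases le_total n k with hnk | hkn
    · have hnk' : (n : ℝ) ≤ k := by exact_mod_cast hnk
      have hneg : (n : ℝ) - (k + 1 : ℕ) ^ 2 ≤ 0 := by push_cast; nlinarith
      exact (mul_nonpos_of_nonpos_of_nonneg hneg (by positivity)).trans (by positivity)
    · have hkn' : (0 : ℝ) ≤ n - k := sub_nonneg.2 (Nat.cast_le.2 hkn)
      calc ((n : ℝ) - (k + 1 : ℕ) ^ 2) * n ^ (k + 1)
          = ((n : ℝ) - (k + 1) ^ 2) * n * n ^ k := by push_cast; ring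
        _ ≤ ((n : ℝ) - k) * (n - k ^ 2) * n ^ k := by
            refine mul_le_mul_of_nonneg_right ?_ (by positivity)
            have : (0 : ℝ) ≤ k ^ 3 + (k + 1) * n := by positivity
            linarith
        _ ≤ ((n : ℝ) - k) * (n * n.descFactorial k) := by
            rw [mul_assoc]
            gcongr
        _ = n * ((n - k) * n.descFactorial k : ℕ) := by
            push_cast [Nat.cast_sub hkn]
            ring

lemma card_filter_injective (α β : Type*) [Fintype α] [Fintype β] [DecidableEq α]
    [DecidableEq β] :
    #{J : α → β | Function.Injective J} = (Fintype.card β).descFactorial (Fintype.card α) := by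
  rw [← Fintype.card_subtype, Fintype.card_congr (Equiv.subtypeInjectiveEquivEmbedding α β),
    Fintype.card_embedding_eq]

lemma mul_exp_neg_div_le {δ t x y : ℝ} (hδ : 0 < δ) (hδx : δ ≤ x) (ht : 0 ≤ t)
    (hy : y - t ≤ x) : y * Real.exp (-(t / δ)) ≤ x := by
  have hx : 0 ≤ x := hδ.le.trans hδx
  rw [Real.exp_neg, ← div_eq_mul_inv, div_le_iff₀ (Real.exp_pos _)]
  calc y ≤ x + t := by linarith
    _ = x + δ * (t / δ) := by field_simp
    _ ≤ x + x * (t / δ) := by gcongr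
    _ = x * (t / δ + 1) := by ring
    _ ≤ x * Real.exp (t / δ) := by gcongr; exact Real.add_one_le_exp _

lemma integral_pos_of_ae_mem_Ioo {α : Type*} [MeasurableSpace α] {μ : Measure α}
    [IsFiniteMeasure μ] [NeZero μ] {f : α → ℝ} {b : ℝ} (hf : AEMeasurable f μ)
    (h : ∀ᵐ x ∂μ, f x ∈ Set.Ioo 0 b) : 0 < ∫ x, f x ∂μ := by
  have hint : Integrable f μ :=
    Integrable.of_mem_Icc 0 b hf (h.mono fun _ hx => Set.Ioo_subset_Icc_self hx)
  have hsupport : Function.support f =ᵐ[μ] Set.univ :=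
    Filter.eventuallyEq_univ.2 (h.mono fun _ hx => hx.1.ne')
  rw [integral_pos_iff_support_of_nonneg_ae (h.mono fun _ hx => hx.1.le) hint,
    measure_congr hsupport]
  exact Measure.measure_univ_pos.2 (NeZero.ne μ)

section Expect

open scoped BigOperators

lemma pow_expect_le_expect_pow {ι : Type*} {s : Finset ι} {f : ι → ℝ} (hs : s.Nonempty)
    (hf : ∀ i ∈ s, 0 ≤ f i) (m : ℕ) : (𝔼 i ∈ s, f i) ^ m ≤ 𝔼 i ∈ s, f i ^ m := by
  have hs0 : (#s : ℝ) ≠ 0 := by exact_mod_cast hs.card_ne_zero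
  have hweight : ∑ _i ∈ s, (#s : ℝ)⁻¹ = 1 := by simp [hs0]
  simpa only [expect_eq_sum_div_card, div_eq_inv_mul, mul_sum] using
    Real.pow_arith_mean_le_arith_mean_pow s (fun _ => (#s : ℝ)⁻¹) f
      (fun _ _ => by positivity) hweight hf m

lemma expect_comp_injective {Ω α β M : Type*} [Fintype Ω] [Nonempty Ω] [Fintype α] [Fintype β]
    [DecidableEq α] [DecidableEq β] [AddCommMonoid M] [Module ℚ≥0 M] {J : α → β}
    (hJ : Function.Injective J) (f : (α → Ω) → M) : 𝔼 σ : β → Ω, f (σ ∘ J) = 𝔼 τ, f τ := by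
  let split : (β → Ω) ≃ (Set.range J → Ω) × ({b // b ∉ Set.range J} → Ω) :=
    Equiv.piEquivPiSubtypeProd (· ∈ Set.range J) fun _ => Ω
  let restrict : (Set.range J → Ω) ≃ (α → Ω) :=
    (Equiv.ofInjective J hJ).symm.arrowCongr (Equiv.refl Ω)
  calc 𝔼 σ : β → Ω, f (σ ∘ J)
      = 𝔼 p : (Set.range J → Ω) × ({b // b ∉ Set.range J} → Ω), f (restrict p.1) :=
        Fintype.expect_equiv split _ _ fun _ => rfl
    _ = 𝔼 τ : Set.range J → Ω, f (restrict τ) := by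
        rw [← univ_product_univ, expect_product]
        simp only [Fintype.expect_const]
    _ = 𝔼 τ, f τ := Fintype.expect_equiv restrict _ _ fun _ => rfl

lemma one_sub_mul_expect_le_expect_expect_comp {Ω α β : Type*} [Fintype Ω] [Nonempty Ω]
    [Fintype α] [Fintype β] [Nonempty β] [DecidableEq α] [DecidableEq β] {a : (α → Ω) → ℝ}
    (ha : ∀ τ, 0 ≤ a τ) :
    (1 - (Fintype.card α : ℝ) ^ 2 / Fintype.card β) * 𝔼 τ, a τ ≤
      𝔼 σ : β → Ω, 𝔼 J : α → β, a (σ ∘ J) := by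
  have hβ : (0 : ℝ) < Fintype.card β := by exact_mod_cast Fintype.card_pos
  have hmean : 0 ≤ 𝔼 τ, a τ := expect_nonneg fun τ _ => ha τ
  have hcard : (1 - (Fintype.card α : ℝ) ^ 2 / Fintype.card β) ≤
      (#{J : α → β | Function.Injective J} : ℝ) / Fintype.card (α → β) := by
    rw [card_filter_injective, Fintype.card_fun, Nat.cast_pow, one_sub_div hβ.ne',
      div_le_div_iff₀ hβ (by positivity), mul_comm (Nat.cast (Nat.descFactorial _ _))]
    exact sub_sq_mul_pow_le_mul_descFactorial _ _
  have hterm (J : α → β) :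
      (if Function.Injective J then 𝔼 τ, a τ else 0) ≤ 𝔼 σ : β → Ω, a (σ ∘ J) := by
    split_ifs with hJ
    · exact (expect_comp_injective hJ a).ge
    · exact expect_nonneg fun σ _ => ha _
  calc (1 - (Fintype.card α : ℝ) ^ 2 / Fintype.card β) * 𝔼 τ, a τ
      ≤ (#{J : α → β | Function.Injective J} : ℝ) / Fintype.card (α → β) * 𝔼 τ, a τ := by gcongr
    _ = 𝔼 J : α → β, if Function.Injective J then 𝔼 τ, a τ else 0 := by
        rw [Fintype.expect_eq_sum_div_card fun J : α → β => if Function.Injective J then _ else _,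
          ← sum_filter, sum_const, nsmul_eq_mul, div_mul_eq_mul_div]
    _ ≤ 𝔼 J : α → β, 𝔼 σ : β → Ω, a (σ ∘ J) := expect_le_expect fun J _ => hterm J
    _ = 𝔼 σ : β → Ω, 𝔼 J : α → β, a (σ ∘ J) := expect_comm _ _ _

end Expect

section EmpiricalDistribution

open scoped BigOperators

variable {Ω : Type*} [Fintype Ω]

lemma xiP_eq_expect {k : ℕ} (P : Measure (WF Ω k)) : xiP P = 𝔼 τ, ∫ ψ, ψ τ ∂P := by
  simp [xiP, Fintype.expect_eq_sum_div_card]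

lemma phiFun_uniform {k : ℕ} (P : Measure (WF Ω k)) :
    phiFun P (fun _ => (Fintype.card Ω : ℝ)⁻¹) = xiP P := by
  simp [phiFun, xiP, ← sum_mul, div_eq_mul_inv]

variable [DecidableEq Ω] {k n : ℕ}

lemma empDist_eq_expect (σ : Fin n → Ω) (ω : Ω) :
    empDist σ ω = 𝔼 j, if σ j = ω then 1 else 0 := by
  simp [empDist, Fintype.expect_eq_sum_div_card]

lemma empDist_mem_stdSimplex [NeZero n] (σ : Fin n → Ω) : empDist σ ∈ stdSimplex ℝ Ω := by
  refine ⟨fun ω => by unfold empDist; positivity, ?_⟩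
  simp only [empDist_eq_expect, ← expect_sum_comm, sum_ite_eq, mem_univ, if_true,
    Fintype.expect_one]

lemma prod_empDist {ι : Type*} [Fintype ι] [DecidableEq ι] (σ : Fin n → Ω) (τ : ι → Ω) :
    ∏ i, empDist σ (τ i) = 𝔼 J : ι → Fin n, if σ ∘ J = τ then 1 else 0 := by
  have hindicator (J : ι → Fin n) :
      ∏ i, (if σ (J i) = τ i then (1 : ℝ) else 0) = if σ ∘ J = τ then 1 else 0 := by
    simp [prod_ite_zero, funext_iff]
  simp only [empDist_eq_expect, Fintype.expect_eq_sum_div_card, prod_div_distrib, prod_const,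
    card_univ, Fintype.card_fun, Nat.cast_pow, prod_univ_sum, Fintype.piFinset_univ, hindicator]

lemma phiFun_empDist (P : Measure (WF Ω k)) (σ : Fin n → Ω) :
    phiFun P (empDist σ) = 𝔼 J : Fin k → Fin n, ∫ ψ, ψ (σ ∘ J) ∂P := by
  simp only [phiFun, prod_empDist, mul_expect, ← expect_sum_comm, mul_ite, mul_one, mul_zero,
    sum_ite_eq, mem_univ, if_true]

lemma le_phiFun_empDist [NeZero n] {P : Measure (WF Ω k)} {δ : ℝ}
    (hδ : ∀ τ, δ ≤ ∫ ψ, ψ τ ∂P) (σ : Fin n → Ω) : δ ≤ phiFun P (empDist σ) := by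
  rw [phiFun_empDist]
  exact le_expect univ_nonempty fun J _ => hδ _

lemma xiP_pow_mul_exp_le_expect_phiFun_pow [NeZero n] [Nonempty Ω] {P : Measure (WF Ω k)}
    {δ : ℝ} (hδ : 0 < δ) (hP : ∀ τ, δ ≤ ∫ ψ, ψ τ ∂P) (m : ℕ) :
    xiP P ^ m * Real.exp (-(m * (k ^ 2 / n * xiP P / δ))) ≤
      𝔼 σ : Fin n → Ω, phiFun P (empDist σ) ^ m := by
  have hP0 (τ : Fin k → Ω) : 0 ≤ ∫ ψ, ψ τ ∂P := hδ.le.trans (hP τ)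
  have hξ : 0 ≤ xiP P := xiP_eq_expect P ▸ expect_nonneg fun τ _ => hP0 τ
  have hlow (σ : Fin n → Ω) : δ ≤ phiFun P (empDist σ) := le_phiFun_empDist hP σ
  have hmean : xiP P - k ^ 2 / n * xiP P ≤ 𝔼 σ : Fin n → Ω, phiFun P (empDist σ) := by
    simpa only [xiP_eq_expect, phiFun_empDist, Fintype.card_fin, sub_mul, one_mul] using
      one_sub_mul_expect_le_expect_expect_comp (β := Fin n) hP0
  calc xiP P ^ m * Real.exp (-(m * (k ^ 2 / n * xiP P / δ)))
      = (xiP P * Real.exp (-(k ^ 2 / n * xiP P / δ))) ^ m := by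
        rw [mul_pow, ← Real.exp_nat_mul, mul_neg]
    _ ≤ (𝔼 σ : Fin n → Ω, phiFun P (empDist σ)) ^ m := by
        gcongr
        exact mul_exp_neg_div_le hδ (le_expect univ_nonempty fun σ _ => hlow σ)
          (by positivity) hmean
    _ ≤ 𝔼 σ : Fin n → Ω, phiFun P (empDist σ) ^ m :=
        pow_expect_le_expect_pow univ_nonempty (fun σ _ => hδ.le.trans (hlow σ)) m

lemma expect_phiFun_pow_le_xiP_pow [NeZero n] [Nonempty Ω] {P : Measure (WF Ω k)}
    (hP : ∀ τ, 0 ≤ ∫ ψ, ψ τ ∂P)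
    (hmax : ∀ μ ∈ stdSimplex ℝ Ω, phiFun P μ ≤ phiFun P (fun _ => (Fintype.card Ω : ℝ)⁻¹))
    (m : ℕ) : 𝔼 σ : Fin n → Ω, phiFun P (empDist σ) ^ m ≤ xiP P ^ m := by
  refine expect_le univ_nonempty fun σ _ => ?_
  have hup : phiFun P (empDist σ) ≤ xiP P :=
    (hmax _ (empDist_mem_stdSimplex σ)).trans_eq (phiFun_uniform P)
  have hlow : 0 ≤ phiFun P (empDist σ) := le_phiFun_empDist hP σ
  gcongr

theorem stmt4_general [Nonempty Ω] (P : Measure (WF Ω k)) (hpos : ∀ τ, 0 < ∫ ψ, ψ τ ∂P)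
    (hmax : ∀ μ ∈ stdSimplex ℝ Ω, phiFun P μ ≤ phiFun P (fun _ => (Fintype.card Ω : ℝ)⁻¹))
    (D : ℝ) :
    ∃ c : ℝ, 0 < c ∧ ∀ n : ℕ, 1 ≤ n → ∀ m : ℕ, (m : ℝ) * k ≤ D * n →
      c * (Fintype.card Ω : ℝ) ^ n * xiP P ^ m ≤
          (∑ σ : Fin n → Ω, phiFun P (empDist σ) ^ m) ∧
        (∑ σ : Fin n → Ω, phiFun P (empDist σ) ^ m) ≤
          (Fintype.card Ω : ℝ) ^ n * xiP P ^ m := by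
  obtain ⟨τ₀, hmin⟩ := Finite.exists_min fun τ : Fin k → Ω => ∫ ψ, ψ τ ∂P
  set δ := ∫ ψ, ψ τ₀ ∂P
  have hδ : 0 < δ := hpos τ₀
  have hξ : 0 ≤ xiP P := xiP_eq_expect P ▸ expect_nonneg fun τ _ => (hpos τ).le
  refine ⟨Real.exp (-(D * k * xiP P / δ)), Real.exp_pos _, fun n hn m hm => ?_⟩
  have : NeZero n := ⟨Nat.one_le_iff_ne_zero.1 hn⟩
  have hsum : ∑ σ : Fin n → Ω, phiFun P (empDist σ) ^ m =
      (Fintype.card Ω : ℝ) ^ n * 𝔼 σ : Fin n → Ω, phiFun P (empDist σ) ^ m := by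
    simp [← Fintype.card_mul_expect]
  have hexponent : (m : ℝ) * (k ^ 2 / n * xiP P / δ) ≤ D * k * xiP P / δ := by
    calc (m : ℝ) * (k ^ 2 / n * xiP P / δ) = m * k / n * k * xiP P / δ := by ring
      _ ≤ D * k * xiP P / δ := by
        gcongr
        rwa [div_le_iff₀ (by positivity)]
  rw [hsum, mul_comm (Real.exp _), mul_assoc, mul_comm (Real.exp _)]
  refine ⟨?_, by gcongr; exact expect_phiFun_pow_le_xiP_pow (fun τ => (hpos τ).le) hmax m⟩
  gcongr
  calc xiP P ^ m * Real.exp (-(D * k * xiP P / δ))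
      ≤ xiP P ^ m * Real.exp (-(m * (k ^ 2 / n * xiP P / δ))) := by gcongr
    _ ≤ _ := xiP_pow_mul_exp_le_expect_phiFun_pow hδ hmin m

end EmpiricalDistribution

/-- Lemma "Cor_F", first moment: under SYM and BAL, for every `D > 0`
there is `c > 0` such that for all `n ≥ 1` and all `m ≤ Dn/k`,
`c·q^n·ξ^m ≤ Σ_σ φ(ρ_σ)^m ≤ q^n·ξ^m`; the middle sum is the expected partition function
`E[Z(G(n,m,P))]`. -/
theorem stmt4 {Ω : Type*} [Fintype Ω] [DecidableEq Ω] [Nonempty Ω]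
    {k : ℕ} [NeZero k] (hk : 2 ≤ k)
    (Ψ : Set (WF Ω k)) (P : Measure (WF Ω k)) [IsProbabilityMeasure P]
    (hΨval : ∀ ψ ∈ Ψ, ∀ τ, ψ τ ∈ Set.Ioo (0 : ℝ) 2)
    (hPΨ : ∀ᵐ ψ ∂P, ψ ∈ Ψ)
    (hSYM : SYMpt Ψ (xiP P) ∧ SYMperm P) (hBAL : BAL P) :
    ∀ D : ℝ, 0 < D → ∃ c : ℝ, 0 < c ∧ ∀ n : ℕ, 1 ≤ n → ∀ m : ℕ,
      (m : ℝ) ≤ D * n / k →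
      c * (Fintype.card Ω : ℝ) ^ n * xiP P ^ m ≤
          (∑ σ : Fin n → Ω, phiFun P (empDist σ) ^ m) ∧
        (∑ σ : Fin n → Ω, phiFun P (empDist σ) ^ m) ≤
          (Fintype.card Ω : ℝ) ^ n * xiP P ^ m := by
  intro D _
  have hpos (τ : Fin k → Ω) : 0 < ∫ ψ, ψ τ ∂P :=
    integral_pos_of_ae_mem_Ioo (measurable_pi_apply τ).aemeasurable
      (hPΨ.mono fun ψ hψ => hΨval ψ hψ τ)
  obtain ⟨c, hc, hbounds⟩ := stmt4_general P hpos hBAL.2 D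
  exact ⟨c, hc, fun n hn m hm =>
    hbounds n hn m ((le_div_iff₀ (Nat.cast_pos.2 (NeZero.pos k))).1 hm)⟩
end

section
/- For all c_1, c_2 ∈ Ω and all ε ∈ ℝ: (1/q)·Σ_{ω∈Ω} (π_{ε,ω}(c_1) − 1/q) = 0, and (1/q)·Σ_{ω∈Ω} (π_{ε,ω}(c_1) − 1/q)·(π_{ε,ω}(c_2) − 1/q) = (ε²/q)·⟨Σ, e_{c_1}⊗e_{c_2}⟩. (In other words, a random vector drawn uniformly from {π_{ε,ω} : ω ∈ Ω} has mean equal to the uniform distribution and covariance matrix (ε²/q)·Σ.) -/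
/-!
The matrix `η = ∑ᵢ √λ̄ᵢ uᵢ ⊗ uᵢ` is a symmetric square root of `Σ = ∑ᵢ λ̄ᵢ uᵢ ⊗ uᵢ`, because the
`uᵢ` are orthonormal, and it annihilates `𝟙`. The deviations `π_{ε,ω} - 𝟙/q` are the rows of `ε η`,
so their sum is `ε 𝟙ᵀη = 0` and their second-moment matrix under the uniform law of `ω` is
`(ε²/q) ηᵀη = (ε²/q) η² = (ε²/q) Σ`.
-/

open Matrix Finset

/-- The perturbed distribution `π_{ε,ω}(σ) = 1/q + ε·⟨η, e_ω⊗e_σ⟩` with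
`η = Σ_i √λ̄_i · u_i ⊗ u_i`. -/
noncomputable def piePert {Ω : Type*} [Fintype Ω] {m : ℕ}
    (u : Fin m → Ω → ℝ) (lbar : Fin m → ℝ) (ε : ℝ) (ω : Ω) : Ω → ℝ :=
  fun σ => (Fintype.card Ω : ℝ)⁻¹ + ε * ∑ i, Real.sqrt (lbar i) * u i ω * u i σ

section SumSelfOuter

variable {ι Ω R : Type*} [Fintype ι] [CommSemiring R]

/-- The matrix `∑ i, s i • u i ⊗ u i`, which for orthonormal `u` has eigenvectors `u i` with
eigenvalues `s i`. It encodes both tensors `η` (weights `√λ̄ᵢ`) and `Σ` (weights `λ̄ᵢ`): the pairing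
of such a tensor with `e_a ⊗ e_b` is the `(a, b)` entry of the matrix. -/
def sumSelfOuter (u : ι → Ω → R) (s : ι → R) : Matrix Ω Ω R :=
  ∑ i, s i • vecMulVec (u i) (u i)

theorem sumSelfOuter_apply (u : ι → Ω → R) (s : ι → R) (a b : Ω) :
    sumSelfOuter u s a b = ∑ i, s i * u i a * u i b := by
  simp [sumSelfOuter, Matrix.sum_apply, vecMulVec_apply, mul_assoc]

theorem isSymm_sumSelfOuter (u : ι → Ω → R) (s : ι → R) : (sumSelfOuter u s).IsSymm := by
  simp [Matrix.IsSymm, sumSelfOuter, transpose_sum, transpose_vecMulVec]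

variable [Fintype Ω]

theorem vecMul_sumSelfOuter_eq_zero {v : Ω → R} {u : ι → Ω → R} (hv : ∀ i, v ⬝ᵥ u i = 0)
    (s : ι → R) : v ᵥ* sumSelfOuter u s = 0 := by
  simp [sumSelfOuter, vecMul_sum, vecMul_smul, vecMul_vecMulVec, hv]

theorem sumSelfOuter_mul_sumSelfOuter [DecidableEq ι] {u : ι → Ω → R}
    (hu : ∀ i j, u i ⬝ᵥ u j = if i = j then 1 else 0) (s t : ι → R) :
    sumSelfOuter u s * sumSelfOuter u t = sumSelfOuter u (s * t) := by
  have mul_term (i j : ι) : s i • vecMulVec (u i) (u i) * t j • vecMulVec (u j) (u j) =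
      if i = j then (s i * t i) • vecMulVec (u i) (u i) else 0 := by
    rw [smul_mul_smul_comm, vecMulVec_mul_vecMulVec, hu]
    split_ifs with hij
    · rw [hij, one_smul]
    · rw [zero_smul, vecMulVec_zero, smul_zero]
  simp only [sumSelfOuter, Finset.sum_mul_sum, mul_term, sum_ite_eq, mem_univ, if_true,
    Pi.mul_apply]

end SumSelfOuter

theorem sumSelfOuter_sqrt_mul_self {ι Ω : Type*} [Fintype ι] [Fintype Ω] [DecidableEq ι]
    {u : ι → Ω → ℝ} (hu : ∀ i j, u i ⬝ᵥ u j = if i = j then 1 else 0)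
    {w : ι → ℝ} (hw : ∀ i, 0 ≤ w i) :
    sumSelfOuter u (fun i => √(w i)) * sumSelfOuter u (fun i => √(w i)) = sumSelfOuter u w := by
  rw [sumSelfOuter_mul_sumSelfOuter hu]
  congr 1
  exact funext fun i => Real.mul_self_sqrt (hw i)

section PiePert

variable {Ω : Type*} [Fintype Ω] {m : ℕ}

theorem piePert_sub_inv_card (u : Fin m → Ω → ℝ) (w : Fin m → ℝ) (ε : ℝ) (ω c : Ω) :
    piePert u w ε ω c - (Fintype.card Ω : ℝ)⁻¹ =
      ε * sumSelfOuter u (fun i => √(w i)) ω c := by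
  rw [piePert, add_sub_cancel_left, sumSelfOuter_apply]

theorem sum_piePert_sub_inv_card {u : Fin m → Ω → ℝ} (hu : ∀ i, ∑ ω, u i ω = 0)
    (w : Fin m → ℝ) (ε : ℝ) (c : Ω) :
    ∑ ω, (piePert u w ε ω c - (Fintype.card Ω : ℝ)⁻¹) = 0 := by
  set η := sumSelfOuter u (fun i => √(w i)) with hη
  have one_vecMul : 1 ᵥ* η = 0 :=
    vecMul_sumSelfOuter_eq_zero (fun i => (one_dotProduct _).trans (hu i)) _
  calc
    _ = ε * ∑ ω, η ω c := by simp only [piePert_sub_inv_card, mul_sum, hη]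
    _ = ε * (1 ᵥ* η) c := by simp only [vecMul, one_dotProduct]
    _ = 0 := by rw [one_vecMul, Pi.zero_apply, mul_zero]

theorem sum_piePert_sub_mul_piePert_sub {u : Fin m → Ω → ℝ}
    (hu : ∀ i j, u i ⬝ᵥ u j = if i = j then 1 else 0)
    {w : Fin m → ℝ} (hw : ∀ i, 0 ≤ w i) (ε : ℝ) (c₁ c₂ : Ω) :
    ∑ ω, (piePert u w ε ω c₁ - (Fintype.card Ω : ℝ)⁻¹) *
        (piePert u w ε ω c₂ - (Fintype.card Ω : ℝ)⁻¹) =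
      ε ^ 2 * sumSelfOuter u w c₁ c₂ := by
  set η := sumSelfOuter u (fun i => √(w i)) with hη
  calc
    _ = ε ^ 2 * ∑ ω, η ω c₁ * η ω c₂ := by
      simp only [piePert_sub_inv_card, mul_mul_mul_comm ε, ← sq, mul_sum, hη]
    _ = ε ^ 2 * (ηᵀ * η) c₁ c₂ := by simp only [mul_apply, transpose_apply]
    _ = ε ^ 2 * sumSelfOuter u w c₁ c₂ := by
      rw [isSymm_sumSelfOuter u _, sumSelfOuter_sqrt_mul_self hu hw]

end PiePert

/-- Claim "Fact_EtaEtaT": a random vector drawn uniformly from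
`{π_{ε,ω} : ω ∈ Ω}` has mean equal to the uniform distribution, and covariance matrix
`(ε²/q)·Σ` where `Σ = Σ_i λ̄_i·u_i⊗u_i`. -/
theorem stmt7 {Ω : Type*} [Fintype Ω] [DecidableEq Ω] (hq : 2 ≤ Fintype.card Ω)
    (u : Fin (Fintype.card Ω - 1) → Ω → ℝ)
    (hortho : ∀ i j, (u i ⬝ᵥ u j) = if i = j then 1 else 0)
    (hperp : ∀ i, ∑ ω, u i ω = 0)
    (lbar : Fin (Fintype.card Ω - 1) → ℝ) (hlbar : ∀ i, 0 ≤ lbar i) :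
    ∀ (ε : ℝ) (c₁ c₂ : Ω),
      ((Fintype.card Ω : ℝ)⁻¹ *
          ∑ ω, (piePert u lbar ε ω c₁ - (Fintype.card Ω : ℝ)⁻¹) = 0) ∧
      ((Fintype.card Ω : ℝ)⁻¹ *
          ∑ ω, (piePert u lbar ε ω c₁ - (Fintype.card Ω : ℝ)⁻¹) *
            (piePert u lbar ε ω c₂ - (Fintype.card Ω : ℝ)⁻¹) =
        ε ^ 2 / (Fintype.card Ω : ℝ) * ∑ i, lbar i * u i c₁ * u i c₂) := by
  intro ε c₁ c₂
  constructor
  · rw [sum_piePert_sub_inv_card hperp, mul_zero]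
  · rw [sum_piePert_sub_mul_piePert_sub hortho hlbar, sumSelfOuter_apply, ← mul_assoc,
      inv_mul_eq_div]
end

section
/- For every integer ℓ ≥ 1, the expectation over ℓ independent P-distributed weight functions ψ_1, …, ψ_ℓ satisfies ∫⋯∫ ( Tr(Φ_{ψ_1}·Φ_{ψ_2}·⋯·Φ_{ψ_ℓ}) − 1 )² dP(ψ_1)⋯dP(ψ_ℓ) = Tr(Ξ^ℓ) − 2·Tr(Φ^ℓ) + 1. -/
open MeasureTheory Matrix Finset

/-!
By independence, the expected product of random matrices is the product of their expectations.
Since `(Tr A) ^ 2 = Tr (A ⊗ A)` and the Kronecker product is multiplicative, the squared trace of a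
product is itself the trace of a product of independent random matrices `X i ⊗ X i`, so after
expanding the square the same principle computes both the quadratic and the linear term.
-/

open scoped Kronecker

section MeanMatrix

variable {α m n 𝕜 : Type*} [MeasurableSpace α] [RCLike 𝕜]

/-- The expectation `E[X]` of a random matrix `X`. It is taken entrywise because `Matrix` carries no
global norm; an entry that is not integrable gets the junk value `0`. -/
noncomputable def meanMatrix (μ : Measure α) (X : α → Matrix m n 𝕜) : Matrix m n 𝕜 :=
  Matrix.of fun a b => ∫ x, X x a b ∂μ

theorem integral_trace [Fintype n] {μ : Measure α} {X : α → Matrix n n 𝕜}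
    (hX : ∀ a b, Integrable (fun x => X x a b) μ) :
    ∫ x, (X x).trace ∂μ = (meanMatrix μ X).trace :=
  integral_finsetSum _ fun a _ => hX a a

theorem integrable_trace [Fintype n] {μ : Measure α} {X : α → Matrix n n 𝕜}
    (hX : ∀ a b, Integrable (fun x => X x a b) μ) :
    Integrable (fun x => (X x).trace) μ :=
  integrable_finsetSum _ fun a _ => hX a a

end MeanMatrix

section IndependentProduct

variable {𝕜 : Type*} [RCLike 𝕜]

theorem integrable_pi_mul_tail {ℓ : ℕ} {α : Fin (ℓ + 1) → Type*} [∀ i, MeasurableSpace (α i)]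
    {μ : ∀ i, Measure (α i)} [∀ i, SigmaFinite (μ i)] {g : α 0 → 𝕜}
    {h : (∀ i : Fin ℓ, α i.succ) → 𝕜}
    (hg : Integrable g (μ 0)) (hh : Integrable h (Measure.pi fun i => μ i.succ)) :
    Integrable (fun f : ∀ i, α i => g (f 0) * h fun i => f i.succ) (Measure.pi μ) :=
  (measurePreserving_piFinSuccAbove μ 0).integrable_comp_of_integrable (hg.mul_prod hh)

theorem integral_pi_mul_tail {ℓ : ℕ} {α : Fin (ℓ + 1) → Type*} [∀ i, MeasurableSpace (α i)]
    (μ : ∀ i, Measure (α i)) [∀ i, SigmaFinite (μ i)] (g : α 0 → 𝕜)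
    (h : (∀ i : Fin ℓ, α i.succ) → 𝕜) :
    ∫ f, g (f 0) * h (fun i => f i.succ) ∂Measure.pi μ =
      (∫ x, g x ∂μ 0) * ∫ f, h f ∂Measure.pi fun i => μ i.succ :=
  ((measurePreserving_piFinSuccAbove μ 0).integral_comp' fun p => g p.1 * h p.2).trans
    (integral_prod_mul (ν := Measure.pi fun i : Fin ℓ => μ i.succ) g h)

variable {n : Type*} [Fintype n] [DecidableEq n]

theorem prod_ofFn_succ_apply {R : Type*} [Semiring R] {ℓ : ℕ} (A : Fin (ℓ + 1) → Matrix n n R)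
    (a b : n) :
    (List.ofFn A).prod a b = ∑ c, A 0 a c * (List.ofFn fun i : Fin ℓ => A i.succ).prod c b := by
  rw [List.ofFn_succ, List.prod_cons, Matrix.mul_apply]

theorem integrable_prod_ofFn_apply {ℓ : ℕ} {α : Fin ℓ → Type*} [∀ i, MeasurableSpace (α i)]
    {μ : ∀ i, Measure (α i)} [∀ i, SigmaFinite (μ i)] {X : ∀ i, α i → Matrix n n 𝕜}
    (hX : ∀ i a b, Integrable (fun x => X i x a b) (μ i)) (a b : n) :
    Integrable (fun f : ∀ i, α i => (List.ofFn fun i => X i (f i)).prod a b) (Measure.pi μ) := by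
  induction ℓ generalizing a b with
  | zero => simp [Measure.pi_of_empty μ]
  | succ ℓ ih =>
    simp only [prod_ofFn_succ_apply]
    exact integrable_finsetSum _ fun c _ =>
      integrable_pi_mul_tail (hX 0 a c) (ih (fun i => hX i.succ) c b)

theorem meanMatrix_prod_ofFn {ℓ : ℕ} {α : Fin ℓ → Type*} [∀ i, MeasurableSpace (α i)]
    {μ : ∀ i, Measure (α i)} [∀ i, SigmaFinite (μ i)] {X : ∀ i, α i → Matrix n n 𝕜}
    (hX : ∀ i a b, Integrable (fun x => X i x a b) (μ i)) :
    meanMatrix (Measure.pi μ) (fun f => (List.ofFn fun i => X i (f i)).prod) =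
      (List.ofFn fun i => meanMatrix (μ i) (X i)).prod := by
  induction ℓ with
  | zero => ext a b; simp [meanMatrix, Measure.pi_of_empty μ]
  | succ ℓ ih =>
    ext a b
    have tail_integrable := integrable_prod_ofFn_apply fun i : Fin ℓ => hX i.succ
    calc ∫ f, (List.ofFn fun i => X i (f i)).prod a b ∂Measure.pi μ
      _ = ∫ f, ∑ c, X 0 (f 0) a c * (List.ofFn fun i : Fin ℓ => X i.succ (f i.succ)).prod c b
            ∂Measure.pi μ := by simp only [prod_ofFn_succ_apply]
      _ = ∑ c, ∫ f, X 0 (f 0) a c * (List.ofFn fun i : Fin ℓ => X i.succ (f i.succ)).prod c b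
            ∂Measure.pi μ :=
        integral_finsetSum _ fun c _ => integrable_pi_mul_tail (hX 0 a c) (tail_integrable c b)
      _ = ∑ c, meanMatrix (μ 0) (X 0) a c *
            meanMatrix (Measure.pi fun i : Fin ℓ => μ i.succ)
              (fun f => (List.ofFn fun i => X i.succ (f i)).prod) c b :=
        Finset.sum_congr rfl fun c _ => integral_pi_mul_tail μ (fun x => X 0 x a c)
          fun f => (List.ofFn fun i => X i.succ (f i)).prod c b
      _ = (List.ofFn fun i => meanMatrix (μ i) (X i)).prod a b := by
        rw [ih fun i => hX i.succ, prod_ofFn_succ_apply]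

end IndependentProduct

section TraceSquare

theorem prod_ofFn_kronecker {R m n : Type*} [CommSemiring R] [Fintype m] [DecidableEq m]
    [Fintype n] [DecidableEq n] {ℓ : ℕ} (A : Fin ℓ → Matrix m m R) (B : Fin ℓ → Matrix n n R) :
    (List.ofFn fun i => A i ⊗ₖ B i).prod = (List.ofFn A).prod ⊗ₖ (List.ofFn B).prod := by
  induction ℓ with
  | zero => simp
  | succ ℓ ih => simp only [List.ofFn_succ, List.prod_cons, ih, Matrix.mul_kronecker_mul]

variable {𝕜 : Type*} [RCLike 𝕜]

theorem integral_sub_const_sq {α : Type*} [MeasurableSpace α] {μ : Measure α}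
    [IsProbabilityMeasure μ] {Y : α → 𝕜} (hY : Integrable Y μ)
    (hY_sq : Integrable (fun x => Y x ^ 2) μ) (c : 𝕜) :
    ∫ x, (Y x - c) ^ 2 ∂μ = ∫ x, Y x ^ 2 ∂μ - 2 * c * ∫ x, Y x ∂μ + c ^ 2 := by
  have expand : ∀ x, (Y x - c) ^ 2 = Y x ^ 2 - 2 * c * Y x + c ^ 2 := fun x => by ring
  have linear_integrable : Integrable (fun x => 2 * c * Y x) μ := hY.const_mul _
  have diff_integrable : Integrable (fun x => Y x ^ 2 - 2 * c * Y x) μ :=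
    hY_sq.sub linear_integrable
  simp only [expand]
  rw [integral_add diff_integrable (integrable_const _),
    integral_sub hY_sq linear_integrable, integral_const_mul, integral_const, probReal_univ,
    one_smul]

theorem stmt11_general {n : Type*} [Fintype n] [DecidableEq n] {ℓ : ℕ} {α : Fin ℓ → Type*}
    [∀ i, MeasurableSpace (α i)] (μ : ∀ i, Measure (α i)) [∀ i, IsProbabilityMeasure (μ i)]
    {X : ∀ i, α i → Matrix n n 𝕜} (hX : ∀ i a b, MemLp (fun x => X i x a b) 2 (μ i)) (c : 𝕜) :
    ∫ f, ((List.ofFn fun i => X i (f i)).prod.trace - c) ^ 2 ∂Measure.pi μ =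
      (List.ofFn fun i => meanMatrix (μ i) fun x => X i x ⊗ₖ X i x).prod.trace -
        2 * c * (List.ofFn fun i => meanMatrix (μ i) (X i)).prod.trace + c ^ 2 := by
  have hX_int : ∀ i a b, Integrable (fun x => X i x a b) (μ i) :=
    fun i a b => (hX i a b).integrable one_le_two
  have hXX_int : ∀ i p r, Integrable (fun x => (X i x ⊗ₖ X i x) p r) (μ i) :=
    fun i p r => (hX i p.1 r.1).integrable_mul (hX i p.2 r.2)
  have trace_sq : ∀ f : ∀ i, α i, (List.ofFn fun i => X i (f i)).prod.trace ^ 2 =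
      (List.ofFn fun i => X i (f i) ⊗ₖ X i (f i)).prod.trace := fun f => by
    rw [prod_ofFn_kronecker, Matrix.trace_kronecker, sq]
  have prod_integrable := integrable_prod_ofFn_apply hX_int
  have kronecker_prod_integrable := integrable_prod_ofFn_apply hXX_int
  rw [integral_sub_const_sq (integrable_trace prod_integrable)
    (by simpa only [trace_sq] using integrable_trace kronecker_prod_integrable)]
  simp only [trace_sq]
  rw [integral_trace kronecker_prod_integrable, meanMatrix_prod_ofFn hXX_int,
    integral_trace prod_integrable, meanMatrix_prod_ofFn hX_int]

end TraceSquare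

section WeightFunctions

open scoped ENNReal

variable {Ω : Type*} [Fintype Ω] [DecidableEq Ω] {k : ℕ} [NeZero k]

theorem memLp_PhiMat_apply {P : Measure (WF Ω k)} {p : ℝ≥0∞}
    (hP : ∀ τ, MemLp (fun ψ : WF Ω k => ψ τ) p P) (ξ : ℝ) (ω ω' : Ω) :
    MemLp (fun ψ => PhiMat ξ ψ ω ω') p P := by
  have marginal_memLp :
      MemLp (fun ψ : WF Ω k => ∑ τ, if τ 0 = ω ∧ τ 1 = ω' then ψ τ else 0) p P := by
    refine memLp_finsetSum _ fun τ _ => ?_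
    split_ifs
    exacts [hP τ, MemLp.zero]
  exact marginal_memLp.const_mul _

theorem memLp_PhiMat_apply_of_mem_Icc {P : Measure (WF Ω k)} [IsFiniteMeasure P] {a b : ℝ}
    (hP : ∀ᵐ ψ ∂P, ∀ τ, ψ τ ∈ Set.Icc a b) (p : ℝ≥0∞) (ξ : ℝ) (ω ω' : Ω) :
    MemLp (fun ψ => PhiMat ξ ψ ω ω') p P :=
  memLp_PhiMat_apply (fun τ => memLp_of_bounded (hP.mono fun _ hψ => hψ τ)
    (measurable_pi_apply τ).aestronglyMeasurable p) ξ ω ω'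

theorem PhiAvg_eq_meanMatrix (ξ : ℝ) (P : Measure (WF Ω k)) :
    PhiAvg ξ P = meanMatrix P (PhiMat ξ) := rfl

theorem XiMat_eq_meanMatrix (ξ : ℝ) (P : Measure (WF Ω k)) :
    XiMat ξ P = meanMatrix P fun ψ => PhiMat ξ ψ ⊗ₖ PhiMat ξ ψ := rfl

end WeightFunctions

/-- trace identity in Lemma "prop:Bound4DeltaYSq": for independent
`P`-distributed weight functions `ψ_1,…,ψ_ℓ`,
`E[(Tr(Φ_{ψ_1}⋯Φ_{ψ_ℓ}) - 1)²] = Tr(Ξ^ℓ) - 2·Tr(Φ^ℓ) + 1`. -/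
theorem stmt11 {Ω : Type*} [Fintype Ω] [DecidableEq Ω] [Nonempty Ω]
    {k : ℕ} [NeZero k] (hk : 2 ≤ k)
    (Ψ : Set (WF Ω k)) (P : Measure (WF Ω k)) [IsProbabilityMeasure P]
    (hΨval : ∀ ψ ∈ Ψ, ∀ τ, ψ τ ∈ Set.Ioo (0 : ℝ) 2)
    (hPΨ : ∀ᵐ ψ ∂P, ψ ∈ Ψ) :
    ∀ ℓ : ℕ, 1 ≤ ℓ →
      (∫ f : Fin ℓ → WF Ω k,
          (Matrix.trace (List.ofFn fun i => PhiMat (xiP P) (f i)).prod - 1) ^ 2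
          ∂(Measure.pi fun _ : Fin ℓ => P)) =
        Matrix.trace (XiMat (xiP P) P ^ ℓ) - 2 * Matrix.trace (PhiAvg (xiP P) P ^ ℓ) + 1 := by
  intro ℓ _
  have entries_memLp := memLp_PhiMat_apply_of_mem_Icc
    (hPΨ.mono fun ψ hψ τ => Set.Ioo_subset_Icc_self (hΨval ψ hψ τ)) 2 (xiP P)
  simpa [PhiAvg_eq_meanMatrix, XiMat_eq_meanMatrix] using
    stmt11_general (fun _ : Fin ℓ => P) (fun _ => entries_memLp) 1
end

section
/- Assume conditions SYM and BAL hold, and let s > 0 satisfy s·|λ| < 1 for every eigenvalue λ of the restriction of Ξ to ℰ (which makes sense since Ξℰ ⊆ ℰ under SYM and BAL). Then Σ_{ℓ=1}^{∞} (s^ℓ/(2ℓ)) · ∫⋯∫ ( Tr(Φ_{ψ_1}·⋯·Φ_{ψ_ℓ}) − 1 )² dP(ψ_1)⋯dP(ψ_ℓ) = −(1/2)·ln det( (id − s·Ξ)|_ℰ ), i.e. the series on the left converges and equals −(1/2)·Σ_λ ln(1 − s·λ), the sum running over the eigenvalues λ of Ξ|_ℰ counted with multiplicity. (The paper applies this with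 s = d(k−1) for d below the condensation threshold, where the spectral hypothesis holds by the generalized Kesten–Stigum bound.) -/
open MeasureTheory Matrix Finset

/-!
A matrix with unit row and column sums absorbs the projection `J = q⁻¹ 𝟙𝟙ᵀ` on both sides, so
`Φ₁ ⋯ Φ_ℓ - J = (Φ₁ - J) ⋯ (Φ_ℓ - J)`. Since `Tr J = 1` and `(Tr A)² = Tr (A ⊗ A)`, independence
gives `E[(Tr (Φ₁ ⋯ Φ_ℓ) - 1)²] = Tr (E[(Φ - J) ⊗ (Φ - J)] ^ ℓ)`. The operator
`E[(Φ - J) ⊗ (Φ - J)]` maps into `ℰ` and agrees with `Ξ` there, so this trace is the `ℓ`-th power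
sum of the eigenvalues of `Ξ` on `ℰ`, and summing over `ℓ` gives the logarithmic series.
-/

open scoped Kronecker

section Algebra

lemma mul_list_prod_eq_self {M : Type*} [Monoid M] {J : M} {L : List M}
    (hL : ∀ a ∈ L, J * a = J) : J * L.prod = J := by
  induction L with
  | nil => simp
  | cons a L ih =>
    rw [List.forall_mem_cons] at hL
    rw [List.prod_cons, ← mul_assoc, hL.1, ih hL.2]

lemma list_prod_map_sub_eq_prod_sub {R : Type*} [Ring R] {J : R} (hJ : IsIdempotentElem J)
    {L : List R} (hL : ∀ a ∈ L, J * a = J ∧ a * J = J) (hne : L ≠ []) :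
    (L.map (· - J)).prod = L.prod - J := by
  induction L with
  | nil => exact absurd rfl hne
  | cons a L ih =>
    rw [List.forall_mem_cons] at hL
    rcases eq_or_ne L [] with rfl | hL_ne
    · simp
    · have hJL : J * L.prod = J := mul_list_prod_eq_self fun b hb => (hL.2 b hb).1
      rw [List.map_cons, List.prod_cons, ih hL.2 hL_ne, List.prod_cons, sub_mul, mul_sub, mul_sub,
        hL.1.2, hJL, hJ.eq, sub_self, sub_zero]

lemma trace_list_prod_sq {R n : Type*} [CommSemiring R] [Fintype n] [DecidableEq n]
    (L : List (Matrix n n R)) : L.prod.trace ^ 2 = (L.map fun A => A ⊗ₖ A).prod.trace := by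
  have hprod : (L.map fun A => A ⊗ₖ A).prod = L.prod ⊗ₖ L.prod := by
    simpa using
      L.prod_hom₂ (· ⊗ₖ ·) (fun A B C D => mul_kronecker_mul A B C D) one_kronecker_one id id
  rw [hprod, trace_kronecker, sq]

lemma trace_pow_eq_sum_pow_of_basis {R M ι : Type*} [CommRing R] [IsDomain R]
    [IsPrincipalIdealRing R] [AddCommGroup M] [Module R M] [Module.Free R M] [Module.Finite R M]
    [Fintype ι] {p : Submodule R M} (b : Module.Basis ι R p) {f : M →ₗ[R] M} (hf : ∀ x, f x ∈ p)
    {d : ι → R} (hd : ∀ j, f (b j) = d j • (b j : M)) {ℓ : ℕ} (hℓ : ℓ ≠ 0) :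
    LinearMap.trace R M (f ^ ℓ) = ∑ j, d j ^ ℓ := by
  classical
  have hmem : ∀ x, (f ^ ℓ) x ∈ p := fun x => by
    obtain ⟨k, rfl⟩ := Nat.exists_eq_succ_of_ne_zero hℓ
    rw [pow_succ', Module.End.mul_apply]
    exact hf _
  have hpow : ∀ k j, (f ^ k) (b j) = d j ^ k • (b j : M) := fun k j => by
    induction k with
    | zero => simp
    | succ k ih => rw [pow_succ', Module.End.mul_apply, ih, map_smul, hd, smul_smul, pow_succ]
  have hrestrict : ∀ j, (f ^ ℓ).restrict (fun x _ => hmem x) (b j) = d j ^ ℓ • b j :=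
    fun j => Subtype.ext (hpow ℓ j)
  rw [← LinearMap.trace_restrict_eq_of_forall_mem p _ hmem, LinearMap.trace_eq_matrix_trace R b]
  simp [Matrix.trace, LinearMap.toMatrix_apply, hrestrict]

lemma exists_basis_of_dotProduct_orthonormal {R n ι : Type*} [CommRing R] [Fintype n] [Fintype ι]
    [DecidableEq ι] {p : Submodule R (n → R)} {v : ι → n → R} (hvp : ∀ j, v j ∈ p)
    (hvON : ∀ i j, (v i ⬝ᵥ v j) = if i = j then 1 else 0)
    (hspan : ∀ z ∈ p, z = ∑ j, (z ⬝ᵥ v j) • v j) :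
    ∃ b : Module.Basis ι R p, ∀ j, (b j : n → R) = v j := by
  let w : ι → p := fun j => ⟨v j, hvp j⟩
  have hli : LinearIndependent R w := Fintype.linearIndependent_iff.2 fun c hc i => by
    have hcv : ∑ j, c j • v j = 0 := by simpa [w] using congrArg p.subtype hc
    simpa [sum_dotProduct, hvON] using congrArg (· ⬝ᵥ v i) hcv
  have htop : ⊤ ≤ Submodule.span R (Set.range w) := fun z _ => by
    have hz : z = ∑ j, ((z : n → R) ⬝ᵥ v j) • w j := Subtype.ext (by simpa [w] using hspan z z.2)
    rw [hz]
    exact Submodule.sum_mem _ fun j _ => Submodule.smul_mem _ _ (Submodule.subset_span ⟨j, rfl⟩)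
  exact ⟨.mk hli htop, fun j => by rw [Module.Basis.mk_apply]⟩

end Algebra

section IndependentProducts

lemma list_prod_ofFn_succ_apply {X n R : Type*} [Fintype n] [DecidableEq n] [Semiring R] {ℓ : ℕ}
    (B : X → Matrix n n R) (f : Fin (ℓ + 1) → X) (i j : n) :
    (List.ofFn fun t => B (f t)).prod i j =
      ∑ k, B (f 0) i k * (List.ofFn fun t => B (Fin.tail f t)).prod k j := by
  rw [List.ofFn_succ, List.prod_cons, Matrix.mul_apply]
  rfl

lemma measurePreserving_head_tail {X : Type*} [MeasurableSpace X] (μ : Measure X) [SigmaFinite μ]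
    (ℓ : ℕ) :
    MeasurePreserving (fun f : Fin (ℓ + 1) → X => (f 0, Fin.tail f))
      (Measure.pi fun _ => μ) (μ.prod (Measure.pi fun _ => μ)) :=
  measurePreserving_piFinSuccAbove (fun _ => μ) 0

lemma integral_comp_head_tail {X E : Type*} [MeasurableSpace X] [NormedAddCommGroup E]
    [NormedSpace ℝ E] (μ : Measure X) [SigmaFinite μ] {ℓ : ℕ} (g : X × (Fin ℓ → X) → E) :
    ∫ f : Fin (ℓ + 1) → X, g (f 0, Fin.tail f) ∂(Measure.pi fun _ => μ) =
      ∫ y, g y ∂(μ.prod (Measure.pi fun _ => μ)) :=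
  (measurePreserving_piFinSuccAbove (fun _ => μ) 0).integral_comp' g

variable {X n 𝕜 : Type*} [MeasurableSpace X] [Fintype n] [DecidableEq n] [RCLike 𝕜]
  {μ : Measure X} [IsProbabilityMeasure μ] {B : X → Matrix n n 𝕜}

lemma integrable_list_prod_ofFn (hB : ∀ i j, Integrable (fun x => B x i j) μ) (ℓ : ℕ) (i j : n) :
    Integrable (fun f : Fin ℓ → X => (List.ofFn fun t => B (f t)).prod i j)
      (Measure.pi fun _ => μ) := by
  induction ℓ generalizing i j with
  | zero => simp
  | succ ℓ ih =>
    simp only [list_prod_ofFn_succ_apply]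
    exact integrable_finsetSum _ fun k _ =>
      (measurePreserving_head_tail μ ℓ).integrable_comp_of_integrable ((hB i k).mul_prod (ih k j))

lemma integral_list_prod_ofFn (hB : ∀ i j, Integrable (fun x => B x i j) μ) (ℓ : ℕ) (i j : n) :
    ∫ f : Fin ℓ → X, (List.ofFn fun t => B (f t)).prod i j ∂(Measure.pi fun _ => μ) =
      ((Matrix.of fun i j => ∫ x, B x i j ∂μ) ^ ℓ) i j := by
  induction ℓ generalizing i j with
  | zero => simp
  | succ ℓ ih =>
    have hint : ∀ k, Integrable (fun y : X × (Fin ℓ → X) =>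
        B y.1 i k * (List.ofFn fun t => B (y.2 t)).prod k j) (μ.prod (Measure.pi fun _ => μ)) :=
      fun k => (hB i k).mul_prod (integrable_list_prod_ofFn hB ℓ k j)
    simp only [list_prod_ofFn_succ_apply]
    rw [integral_comp_head_tail μ fun y : X × (Fin ℓ → X) =>
        ∑ k, B y.1 i k * (List.ofFn fun t => B (y.2 t)).prod k j,
      integral_finsetSum _ fun k _ => hint k, pow_succ', Matrix.mul_apply]
    refine Finset.sum_congr rfl fun k _ => ?_
    rw [← ih]
    exact integral_prod_mul (fun x => B x i k) fun f : Fin ℓ → X =>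
      (List.ofFn fun t => B (f t)).prod k j

lemma integral_trace_list_prod_ofFn (hB : ∀ i j, Integrable (fun x => B x i j) μ) (ℓ : ℕ) :
    ∫ f : Fin ℓ → X, (List.ofFn fun t => B (f t)).prod.trace ∂(Measure.pi fun _ => μ) =
      ((Matrix.of fun i j => ∫ x, B x i j ∂μ) ^ ℓ).trace := by
  simp only [Matrix.trace, Matrix.diag_apply]
  rw [integral_finsetSum _ fun i _ => integrable_list_prod_ofFn hB ℓ i i]
  simp only [integral_list_prod_ofFn hB]

end IndependentProducts

section Margins

variable {n : Type*} [Fintype n]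

/-- The rank one projection `J = q⁻¹ 𝟙𝟙ᵀ` onto the constant vectors. -/
noncomputable def uniformProj (n : Type*) [Fintype n] : Matrix n n ℝ :=
  (Fintype.card n : ℝ)⁻¹ • vecMulVec 1 1

/-- Unit row and column sums, with entries of arbitrary sign (unlike `doublyStochastic`): the
property that SYM gives to the matrices `Φ_ψ`. -/
def HasUnitMargins (A : Matrix n n ℝ) : Prop :=
  A *ᵥ 1 = 1 ∧ 1 ᵥ* A = 1

/-- The set `ℰ` as a subspace, so that bases of it can be considered. -/
def marginFree (n : Type*) [Fintype n] : Submodule ℝ (n × n → ℝ) where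
  carrier := Ecal n
  zero_mem' y := by simp
  add_mem' hz hw y := by simp [add_dotProduct, hz y, hw y]
  smul_mem' c z hz y := by simp [hz y]

lemma uniformProj_mul (A : Matrix n n ℝ) :
    uniformProj n * A = (Fintype.card n : ℝ)⁻¹ • vecMulVec 1 (1 ᵥ* A) := by
  rw [uniformProj, smul_mul, vecMulVec_mul]

lemma mul_uniformProj (A : Matrix n n ℝ) :
    A * uniformProj n = (Fintype.card n : ℝ)⁻¹ • vecMulVec (A *ᵥ 1) 1 := by
  rw [uniformProj, Matrix.mul_smul, mul_vecMulVec]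

lemma transpose_uniformProj : (uniformProj n)ᵀ = uniformProj n := by
  rw [uniformProj, transpose_smul, transpose_vecMulVec]

lemma HasUnitMargins.absorbs_uniformProj {A : Matrix n n ℝ} (hA : HasUnitMargins A) :
    uniformProj n * A = uniformProj n ∧ A * uniformProj n = uniformProj n := by
  rw [uniformProj_mul, mul_uniformProj, hA.1, hA.2]
  exact ⟨rfl, rfl⟩

section Nonempty

variable [Nonempty n]

lemma trace_uniformProj : (uniformProj n).trace = 1 := by
  rw [uniformProj, trace_smul, trace_vecMulVec]
  simp

lemma hasUnitMargins_uniformProj : HasUnitMargins (uniformProj n) := by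
  constructor <;> ext <;> simp [uniformProj, mulVec, vecMul, dotProduct]

lemma isIdempotentElem_uniformProj : IsIdempotentElem (uniformProj n) :=
  hasUnitMargins_uniformProj.absorbs_uniformProj.1

lemma HasUnitMargins.one_vecMul_sub_uniformProj {A : Matrix n n ℝ} (hA : HasUnitMargins A) :
    1 ᵥ* (A - uniformProj n) = 0 := by
  rw [vecMul_sub, hA.2, hasUnitMargins_uniformProj.2, sub_self]

end Nonempty

lemma vec_mem_marginFree_iff {Z : Matrix n n ℝ} :
    vec Z ∈ marginFree n ↔ Z *ᵥ 1 = 0 ∧ 1 ᵥ* Z = 0 := by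
  have hrow : ∀ y : n → ℝ, (vec Z ⬝ᵥ fun p => y p.2) = (Z *ᵥ 1) ⬝ᵥ y := fun y => by
    simp only [dotProduct, vec, mulVec, Pi.one_apply, mul_one, Finset.sum_mul]
    exact Fintype.sum_prod_type_right _
  have hcol : ∀ y : n → ℝ, (vec Z ⬝ᵥ fun p => y p.1) = (1 ᵥ* Z) ⬝ᵥ y := fun y => by
    simp only [dotProduct, vec, vecMul, Pi.one_apply, one_mul, Finset.sum_mul]
    exact Fintype.sum_prod_type _
  change (∀ y : n → ℝ, _ ∧ _) ↔ _
  simp only [hrow, hcol, forall_and, dotProduct_eq_zero_iff]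

lemma HasUnitMargins.kronecker_sub_uniformProj_mulVec_mem [Nonempty n] {A : Matrix n n ℝ}
    (hA : HasUnitMargins A) (z : n × n → ℝ) :
    ((A - uniformProj n) ⊗ₖ (A - uniformProj n)) *ᵥ z ∈ marginFree n := by
  obtain ⟨Z, rfl⟩ := vec_bijective.surjective z
  rw [kronecker_mulVec_vec, vec_mem_marginFree_iff]
  constructor
  · rw [← mulVec_mulVec, mulVec_transpose, hA.one_vecMul_sub_uniformProj, mulVec_zero]
  · rw [← vecMul_vecMul, ← vecMul_vecMul, hA.one_vecMul_sub_uniformProj, zero_vecMul, zero_vecMul]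

lemma kronecker_sub_uniformProj_mulVec (A : Matrix n n ℝ) {z : n × n → ℝ}
    (hz : z ∈ marginFree n) :
    ((A - uniformProj n) ⊗ₖ (A - uniformProj n)) *ᵥ z = (A ⊗ₖ A) *ᵥ z := by
  obtain ⟨Z, rfl⟩ := vec_bijective.surjective z
  obtain ⟨hrow, hcol⟩ := vec_mem_marginFree_iff.1 hz
  have hJZ : uniformProj n * Z = 0 := by rw [uniformProj_mul, hcol, vecMulVec_zero, smul_zero]
  have hZJ : Z * uniformProj n = 0 := by rw [mul_uniformProj, hrow, zero_vecMulVec, smul_zero]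
  rw [kronecker_mulVec_vec, kronecker_mulVec_vec, transpose_sub, transpose_uniformProj,
    Matrix.sub_mul, hJZ, sub_zero, Matrix.mul_sub, Matrix.mul_assoc A Z (uniformProj n), hZJ,
    Matrix.mul_zero, sub_zero]

lemma sq_trace_list_prod_sub_one [DecidableEq n] [Nonempty n] {L : List (Matrix n n ℝ)}
    (hL : ∀ A ∈ L, HasUnitMargins A) (hne : L ≠ []) :
    (L.prod.trace - 1) ^ 2 =
      (L.map fun A => (A - uniformProj n) ⊗ₖ (A - uniformProj n)).prod.trace := by
  have hprod : (L.map (· - uniformProj n)).prod = L.prod - uniformProj n :=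
    list_prod_map_sub_eq_prod_sub isIdempotentElem_uniformProj
      (fun A hA => (hL A hA).absorbs_uniformProj) hne
  rw [← trace_uniformProj (n := n), ← trace_sub, ← hprod, trace_list_prod_sq, List.map_map]
  rfl

end Margins

section SecondMoment

variable {X n : Type*} [MeasurableSpace X]

/-- The expected Kronecker square `E[Φ ⊗ Φ]` of a random matrix `Φ`; for `Φ = PhiMat ξ` this is
`XiMat ξ`. -/
noncomputable def secondMoment (Φ : X → Matrix n n ℝ) (μ : Measure X) :
    Matrix (n × n) (n × n) ℝ :=
  Matrix.of fun p r => ∫ x, (Φ x ⊗ₖ Φ x) p r ∂μ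

variable {μ : Measure X} {Φ : X → Matrix n n ℝ}

lemma integrable_kronecker_self_apply (hΦ : ∀ i j, MemLp (fun x => Φ x i j) 2 μ) (p r : n × n) :
    Integrable (fun x => (Φ x ⊗ₖ Φ x) p r) μ :=
  (hΦ p.1 r.1).integrable_mul (hΦ p.2 r.2)

variable [Fintype n]

lemma integrable_kronecker_self_mulVec (hΦ : ∀ i j, MemLp (fun x => Φ x i j) 2 μ)
    (z : n × n → ℝ) : Integrable (fun x => (Φ x ⊗ₖ Φ x) *ᵥ z) μ :=
  Integrable.of_eval fun p => integrable_finsetSum _ fun r _ =>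
    (integrable_kronecker_self_apply hΦ p r).mul_const (z r)

lemma secondMoment_mulVec (hΦ : ∀ i j, MemLp (fun x => Φ x i j) 2 μ) (z : n × n → ℝ) :
    secondMoment Φ μ *ᵥ z = ∫ x, (Φ x ⊗ₖ Φ x) *ᵥ z ∂μ := by
  ext p
  rw [eval_integral fun p => (integrable_kronecker_self_mulVec hΦ z).eval p]
  simp only [mulVec, dotProduct, secondMoment, Matrix.of_apply, ← integral_mul_const]
  exact (integral_finsetSum _ fun r _ =>
    (integrable_kronecker_self_apply hΦ p r).mul_const (z r)).symm

variable [IsProbabilityMeasure μ]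

lemma memLp_sub_uniformProj (hΦ : ∀ i j, MemLp (fun x => Φ x i j) 2 μ) (i j : n) :
    MemLp (fun x => (Φ x - uniformProj n) i j) 2 μ :=
  (hΦ i j).sub (memLp_const _)

lemma secondMoment_sub_uniformProj_mulVec (hΦ : ∀ i j, MemLp (fun x => Φ x i j) 2 μ)
    {z : n × n → ℝ} (hz : z ∈ marginFree n) :
    secondMoment (fun x => Φ x - uniformProj n) μ *ᵥ z = secondMoment Φ μ *ᵥ z := by
  rw [secondMoment_mulVec (memLp_sub_uniformProj hΦ), secondMoment_mulVec hΦ]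
  simp only [kronecker_sub_uniformProj_mulVec _ hz]

variable [Nonempty n]

lemma secondMoment_sub_uniformProj_mulVec_mem (hΦ : ∀ i j, MemLp (fun x => Φ x i j) 2 μ)
    (hmarg : ∀ᵐ x ∂μ, HasUnitMargins (Φ x)) (z : n × n → ℝ) :
    secondMoment (fun x => Φ x - uniformProj n) μ *ᵥ z ∈ marginFree n := by
  rw [secondMoment_mulVec (memLp_sub_uniformProj hΦ)]
  exact (marginFree n).convex.integral_mem (marginFree n).closed_of_finiteDimensional
    (hmarg.mono fun x hx => hx.kronecker_sub_uniformProj_mulVec_mem z)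
    (integrable_kronecker_self_mulVec (memLp_sub_uniformProj hΦ) z)

variable [DecidableEq n]

lemma trace_secondMoment_sub_uniformProj_pow {ι : Type*} [Fintype ι]
    (hΦ : ∀ i j, MemLp (fun x => Φ x i j) 2 μ) (hmarg : ∀ᵐ x ∂μ, HasUnitMargins (Φ x))
    (b : Module.Basis ι ℝ (marginFree n)) {lam : ι → ℝ}
    (heig : ∀ j, secondMoment Φ μ *ᵥ b j = lam j • (b j : n × n → ℝ)) {ℓ : ℕ} (hℓ : ℓ ≠ 0) :
    (secondMoment (fun x => Φ x - uniformProj n) μ ^ ℓ).trace = ∑ j, lam j ^ ℓ := by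
  rw [← Matrix.trace_toLin'_eq, toLin'_pow]
  refine trace_pow_eq_sum_pow_of_basis b
    (fun z => secondMoment_sub_uniformProj_mulVec_mem hΦ hmarg z) (fun j => ?_) hℓ
  rw [toLin'_apply, secondMoment_sub_uniformProj_mulVec hΦ (b j).2, heig]

lemma integral_sq_trace_list_prod_sub_one (hΦ : ∀ i j, MemLp (fun x => Φ x i j) 2 μ)
    (hmarg : ∀ᵐ x ∂μ, HasUnitMargins (Φ x)) {ℓ : ℕ} (hℓ : ℓ ≠ 0) :
    ∫ f : Fin ℓ → X, ((List.ofFn fun t => Φ (f t)).prod.trace - 1) ^ 2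
        ∂(Measure.pi fun _ => μ) =
      (secondMoment (fun x => Φ x - uniformProj n) μ ^ ℓ).trace := by
  have hall : ∀ᵐ f ∂(Measure.pi fun _ : Fin ℓ => μ), ∀ t, HasUnitMargins (Φ (f t)) :=
    ae_all_iff.2 fun t =>
      (Measure.tendsto_eval_ae_ae (μ := fun _ : Fin ℓ => μ) (i := t)).eventually hmarg
  have hsq : ∀ᵐ f ∂(Measure.pi fun _ : Fin ℓ => μ),
      ((List.ofFn fun t => Φ (f t)).prod.trace - 1) ^ 2 = (List.ofFn fun t =>
        (Φ (f t) - uniformProj n) ⊗ₖ (Φ (f t) - uniformProj n)).prod.trace := by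
    filter_upwards [hall] with f hf
    rw [sq_trace_list_prod_sub_one (List.forall_mem_ofFn_iff.2 hf) (by simpa using hℓ),
      List.map_ofFn]
    rfl
  rw [integral_congr_ae hsq]
  exact integral_trace_list_prod_ofFn
    (integrable_kronecker_self_apply (memLp_sub_uniformProj hΦ)) ℓ

end SecondMoment

lemma hasSum_sum_pow_div_two_mul {ι : Type*} [Fintype ι] {s : ℝ} {lam : ι → ℝ}
    (hs : ∀ j, |s * lam j| < 1) :
    HasSum (fun ℓ : ℕ => if ℓ = 0 then 0 else s ^ ℓ / (2 * ℓ) * ∑ j, lam j ^ ℓ)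
      (-(1 / 2) * ∑ j, Real.log (1 - s * lam j)) := by
  have hlog : HasSum (fun ℓ : ℕ => ∑ j, 1 / 2 * ((s * lam j) ^ (ℓ + 1) / (ℓ + 1)))
      (∑ j, 1 / 2 * -Real.log (1 - s * lam j)) :=
    hasSum_sum fun j _ => (Real.hasSum_pow_div_log_of_abs_lt_one (hs j)).mul_left _
  have hneg : ∑ j, 1 / 2 * -Real.log (1 - s * lam j) =
      -(1 / 2) * ∑ j, Real.log (1 - s * lam j) := by
    simp [Finset.mul_sum]
  rw [← hasSum_nat_add_iff' 1, Finset.sum_range_one, if_pos rfl, sub_zero, ← hneg]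
  refine hlog.congr_fun fun ℓ => ?_
  rw [if_neg ℓ.succ_ne_zero, Finset.mul_sum]
  refine Finset.sum_congr rfl fun j _ => ?_
  rw [mul_pow, Nat.cast_succ]
  field_simp

theorem stmt12_general {X n ι : Type*} [MeasurableSpace X] [Fintype n] [DecidableEq n] [Nonempty n]
    [Fintype ι] {μ : Measure X} [IsProbabilityMeasure μ] {Φ : X → Matrix n n ℝ}
    (hΦ : ∀ i j, MemLp (fun x => Φ x i j) 2 μ) (hmarg : ∀ᵐ x ∂μ, HasUnitMargins (Φ x))
    (b : Module.Basis ι ℝ (marginFree n)) {lam : ι → ℝ}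
    (heig : ∀ j, secondMoment Φ μ *ᵥ b j = lam j • (b j : n × n → ℝ))
    {s : ℝ} (hs : ∀ j, |s * lam j| < 1) :
    HasSum
      (fun ℓ : ℕ => if ℓ = 0 then 0 else
        s ^ ℓ / (2 * ℓ) *
          ∫ f : Fin ℓ → X, ((List.ofFn fun t => Φ (f t)).prod.trace - 1) ^ 2
            ∂(Measure.pi fun _ => μ))
      (-(1 / 2) * ∑ j, Real.log (1 - s * lam j)) := by
  refine (hasSum_sum_pow_div_two_mul hs).congr_fun fun ℓ => ?_
  split_ifs with hℓ
  · rfl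
  · rw [integral_sq_trace_list_prod_sub_one hΦ hmarg hℓ,
      trace_secondMoment_sub_uniformProj_pow hΦ hmarg b heig hℓ]

section PhiMat

variable {Ω : Type*} [Fintype Ω] [DecidableEq Ω] {k : ℕ} [NeZero k]
  {Ψ : Set (WF Ω k)} {ξ : ℝ} {ψ : WF Ω k}

lemma SYMpt.card_pow_mul_pos [Nonempty Ω] (hSYM : SYMpt Ψ ξ) (hψ : ψ ∈ Ψ)
    (hpos : ∀ τ, 0 < ψ τ) : 0 < (Fintype.card Ω : ℝ) ^ (k - 1) * ξ := by
  obtain ⟨ω⟩ := ‹Nonempty Ω›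
  rw [← hSYM ψ hψ 0 ω, ← Finset.sum_filter]
  exact Finset.sum_pos (fun τ _ => hpos τ) ⟨fun _ => ω, by simp⟩

lemma SYMpt.hasUnitMargins_PhiMat [Nonempty Ω] (hSYM : SYMpt Ψ ξ) (hψ : ψ ∈ Ψ)
    (hpos : ∀ τ, 0 < ψ τ) : HasUnitMargins (PhiMat ξ ψ) := by
  have hξ := (hSYM.card_pow_mul_pos hψ hpos).ne'
  constructor
  · ext ω
    simp only [mulVec, dotProduct, Pi.one_apply, mul_one, PhiMat]
    rw [← Finset.mul_sum, Finset.sum_comm, ← inv_mul_cancel₀ hξ, ← hSYM ψ hψ 0 ω]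
    simp [ite_and]
  · ext ω
    simp only [vecMul, dotProduct, Pi.one_apply, one_mul, PhiMat]
    rw [← Finset.mul_sum, Finset.sum_comm, ← inv_mul_cancel₀ hξ, ← hSYM ψ hψ 1 ω]
    simp [ite_and]

lemma memLp_PhiMat {P : Measure (WF Ω k)} {p : ENNReal}
    (hP : ∀ τ, MemLp (fun ψ : WF Ω k => ψ τ) p P) (ξ : ℝ) (ω ω' : Ω) :
    MemLp (fun ψ => PhiMat ξ ψ ω ω') p P := by
  have hsum : MemLp (fun ψ : WF Ω k => ∑ τ, if τ 0 = ω ∧ τ 1 = ω' then ψ τ else 0) p P :=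
    memLp_finsetSum _ fun τ _ => by
      split_ifs
      exacts [hP τ, MemLp.zero']
  exact hsum.const_mul _

end PhiMat

/-- Lemma "prop:Bound4DeltaYSq": under SYM and BAL, if `(v_j, λ_j)` is an
orthonormal eigenbasis of the restriction of `Ξ` to `ℰ` and `s > 0` satisfies `s·|λ_j| < 1`
for every eigenvalue, then
`Σ_{ℓ≥1} (s^ℓ/(2ℓ))·E[(Tr(Φ_{ψ_1}⋯Φ_{ψ_ℓ}) - 1)²] = -(1/2)·Σ_j ln(1 - s·λ_j)`,
the series converging with the stated sum. -/
theorem stmt12 {Ω : Type*} [Fintype Ω] [DecidableEq Ω] [Nonempty Ω]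
    {k : ℕ} [NeZero k] (hk : 2 ≤ k)
    (Ψ : Set (WF Ω k)) (P : Measure (WF Ω k)) [IsProbabilityMeasure P]
    (hΨval : ∀ ψ ∈ Ψ, ∀ τ, ψ τ ∈ Set.Ioo (0 : ℝ) 2)
    (hPΨ : ∀ᵐ ψ ∂P, ψ ∈ Ψ)
    (hSYM : SYMpt Ψ (xiP P) ∧ SYMperm P) (hBAL : BAL P)
    (s : ℝ) (hs : 0 < s)
    {m : ℕ} (v : Fin m → Ω × Ω → ℝ) (lam : Fin m → ℝ)
    (hvE : ∀ j, v j ∈ Ecal Ω)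
    (hvON : ∀ i j, (v i ⬝ᵥ v j) = if i = j then 1 else 0)
    (heig : ∀ j, (XiMat (xiP P) P).mulVec (v j) = lam j • v j)
    (hspan : ∀ z ∈ Ecal Ω, z = ∑ j, (z ⬝ᵥ v j) • v j)
    (hslam : ∀ j, s * |lam j| < 1) :
    HasSum
      (fun ℓ : ℕ => if ℓ = 0 then 0 else
        s ^ ℓ / (2 * ℓ) *
          ∫ f : Fin ℓ → WF Ω k,
            (Matrix.trace (List.ofFn fun i => PhiMat (xiP P) (f i)).prod - 1) ^ 2
            ∂(Measure.pi fun _ : Fin ℓ => P))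
      (-(1 / 2) * ∑ j, Real.log (1 - s * lam j)) := by
  obtain ⟨b, hb⟩ := exists_basis_of_dotProduct_orthonormal (p := marginFree Ω) hvE hvON hspan
  have hLp : ∀ τ, MemLp (fun ψ : WF Ω k => ψ τ) 2 P := fun τ =>
    memLp_of_bounded (hPΨ.mono fun ψ hψ => Set.Ioo_subset_Icc_self (hΨval ψ hψ τ))
      (measurable_pi_apply τ).aestronglyMeasurable 2
  have hmarg : ∀ᵐ ψ ∂P, HasUnitMargins (PhiMat (xiP P) ψ) := hPΨ.mono fun ψ hψ =>
    hSYM.1.hasUnitMargins_PhiMat hψ fun τ => (hΨval ψ hψ τ).1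
  exact stmt12_general (memLp_PhiMat hLp (xiP P)) hmarg b (fun j => (hb j).symm ▸ heig j)
    fun j => by simpa [abs_mul, abs_of_pos hs] using hslam j
end

section
/- For every ρ ∈ R(Ω): Σ_{σ_1,σ_2,τ_1,τ_2 ∈ Ω} ψ_{q,β}(σ_1,σ_2)·ψ_{q,β}(τ_1,τ_2)·ρ(σ_1,τ_1)·ρ(σ_2,τ_2) = 1 − 2(1−e^{−β})/q + (1−e^{−β})²·Σ_{σ,τ∈Ω} ρ(σ,τ)². Consequently, as a function of ρ ∈ R(Ω), this expression has the uniform distribution ρ̄ on Ω×Ω as its unique global minimizer; that is, the Potts antiferromagnet satisfies condition MIN for all q ≥ 2 and β > 0. -/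
open Finset

/-- The Potts weight function `ψ_{q,β}(σ,τ) = exp(-β·1{σ=τ})`. -/
noncomputable def pottsPsi (q : ℕ) (β : ℝ) : Fin q → Fin q → ℝ :=
  fun σ τ => Real.exp (-(β * if σ = τ then 1 else 0))

/-- `R(Ω)`: distributions on `Ω×Ω` with both marginals uniform. -/
def RSet (q : ℕ) : Set (Fin q × Fin q → ℝ) :=
  {ρ | (∀ p, 0 ≤ ρ p) ∧ (∀ s : Fin q, ∑ t : Fin q, ρ (s, t) = (q : ℝ)⁻¹) ∧
    (∀ s : Fin q, ∑ t : Fin q, ρ (t, s) = (q : ℝ)⁻¹)}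

/-- The second-moment functional of the Potts antiferromagnet. -/
noncomputable def pottsPair (q : ℕ) (β : ℝ) (ρ : Fin q × Fin q → ℝ) : ℝ :=
  ∑ σ₁ : Fin q, ∑ σ₂ : Fin q, ∑ τ₁ : Fin q, ∑ τ₂ : Fin q,
    pottsPsi q β σ₁ σ₂ * pottsPsi q β τ₁ τ₂ * ρ (σ₁, τ₁) * ρ (σ₂, τ₂)

/-!
Write `c = 1 - e^{-β}`, so that the Potts weight is `1 - c·1{σ = τ}`. Summing a function of two
spins against this weight takes its full sum and subtracts `c` times its diagonal sum. Doing so in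
both coordinates of `ρ(σ₁,τ₁) ρ(σ₂,τ₂)` leaves the squared total mass, minus `c` times the sums of
squares of the two marginals, plus `c²` times the sum of squares of `ρ`. On `R(Ω)` only the last
term depends on `ρ`, and a sum of squares with prescribed total is minimized only by the constant
function.
-/

section SumOfSquares

variable {ι R : Type*} [Fintype ι]

theorem sum_sub_const_sq_of_sum_eq [CommRing R] {f : ι → R} {a : R}
    (hf : ∑ i, f i = ∑ _i : ι, a) :
    ∑ i, (f i - a) ^ 2 = ∑ i, f i ^ 2 - ∑ _i : ι, a ^ 2 :=
  calc ∑ i, (f i - a) ^ 2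
      = ∑ i, (f i ^ 2 - a ^ 2 - 2 * a * (f i - a)) := sum_congr rfl fun i _ => by ring
    _ = ∑ i, f i ^ 2 - ∑ _i : ι, a ^ 2 - 2 * a * (∑ i, f i - ∑ _i : ι, a) := by
        rw [sum_sub_distrib, sum_sub_distrib, ← mul_sum, sum_sub_distrib]
    _ = ∑ i, f i ^ 2 - ∑ _i : ι, a ^ 2 := by rw [hf, sub_self, mul_zero, sub_zero]

theorem sum_const_sq_lt_sum_sq_of_sum_eq [CommRing R] [LinearOrder R] [IsStrictOrderedRing R]
    {f : ι → R} {a : R} (hf : ∑ i, f i = ∑ _i : ι, a) (hne : f ≠ fun _ => a) :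
    ∑ _i : ι, a ^ 2 < ∑ i, f i ^ 2 := by
  obtain ⟨i, hi⟩ := Function.ne_iff.mp hne
  have deviation_pos : 0 < ∑ i, (f i - a) ^ 2 :=
    sum_pos' (fun _ _ => sq_nonneg _) ⟨i, mem_univ i, sq_pos_of_ne_zero (sub_ne_zero.mpr hi)⟩
  rwa [sum_sub_const_sq_of_sum_eq hf, sub_pos] at deviation_pos

end SumOfSquares

section PottsKernel

variable {ι κ R : Type*} [DecidableEq ι]

/-- The Potts interaction with an arbitrary weight `1 - c` on equal spins, over any ring. The
parameter is the deficit `c`, so that `c = 1 - e^{-β}` gives `ψ_{q,β}`. -/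
def pottsKernel [Ring R] (c : R) (i j : ι) : R :=
  1 - if i = j then c else 0

theorem sum_pottsKernel_mul [Fintype ι] [Ring R] (c : R) (f : ι → ι → R) :
    ∑ i, ∑ j, pottsKernel c i j * f i j = ∑ i, ∑ j, f i j - c * ∑ i, f i i := by
  simp only [pottsKernel, sub_mul, one_mul, ite_mul, zero_mul, sum_sub_distrib, sum_ite_eq,
    mem_univ, if_true, mul_sum]

theorem sum_pottsKernel_mul_pottsKernel_mul [Fintype ι] [Fintype κ] [DecidableEq κ] [CommRing R]
    (c d : R) (ρ : ι × κ → R) :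
    ∑ i₁, ∑ i₂, ∑ j₁, ∑ j₂,
        pottsKernel c i₁ i₂ * pottsKernel d j₁ j₂ * ρ (i₁, j₁) * ρ (i₂, j₂) =
      (∑ i, ∑ j, ρ (i, j)) ^ 2 - c * ∑ i, (∑ j, ρ (i, j)) ^ 2
        - d * ∑ j, (∑ i, ρ (i, j)) ^ 2 + c * d * ∑ i, ∑ j, ρ (i, j) ^ 2 := by
  have sum_second (i₁ i₂ : ι) :
      ∑ j₁, ∑ j₂, pottsKernel c i₁ i₂ * pottsKernel d j₁ j₂ * ρ (i₁, j₁) * ρ (i₂, j₂) =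
        pottsKernel c i₁ i₂ * ((∑ j, ρ (i₁, j)) * ∑ j, ρ (i₂, j)
          - d * ∑ j, ρ (i₁, j) * ρ (i₂, j)) := by
    rw [sum_mul_sum, ← sum_pottsKernel_mul d fun j₁ j₂ => ρ (i₁, j₁) * ρ (i₂, j₂)]
    simp only [mul_sum, mul_assoc]
  have overlap : ∑ i₁, ∑ i₂, ∑ j, ρ (i₁, j) * ρ (i₂, j) = ∑ j, (∑ i, ρ (i, j)) ^ 2 := by
    simp only [sq, sum_mul_sum]
    rw [sum_comm_cycle]
  calc ∑ i₁, ∑ i₂, ∑ j₁, ∑ j₂,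
        pottsKernel c i₁ i₂ * pottsKernel d j₁ j₂ * ρ (i₁, j₁) * ρ (i₂, j₂)
      = ∑ i₁, ∑ i₂, ((∑ j, ρ (i₁, j)) * ∑ j, ρ (i₂, j) - d * ∑ j, ρ (i₁, j) * ρ (i₂, j))
          - c * ∑ i, ((∑ j, ρ (i, j)) * ∑ j, ρ (i, j) - d * ∑ j, ρ (i, j) * ρ (i, j)) := by
        simp only [sum_second, sum_pottsKernel_mul]
    _ = ((∑ i, ∑ j, ρ (i, j)) ^ 2 - d * ∑ j, (∑ i, ρ (i, j)) ^ 2)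
          - c * (∑ i, (∑ j, ρ (i, j)) ^ 2 - d * ∑ i, ∑ j, ρ (i, j) ^ 2) := by
        simp only [sum_sub_distrib, ← mul_sum, ← sum_mul, overlap, ← sq]
    _ = _ := by ring

end PottsKernel

section UniformMarginals

variable {ι κ K : Type*} [Fintype ι] [Fintype κ] [Field K]

/-- A weight on `ι × κ`, possibly signed, both of whose marginals are uniform probability
distributions: the linear constraints defining `R(Ω)`. -/
def HasUniformMarginals (ρ : ι × κ → K) : Prop :=
  (∀ i, ∑ j, ρ (i, j) = (Fintype.card ι : K)⁻¹) ∧ ∀ j, ∑ i, ρ (i, j) = (Fintype.card κ : K)⁻¹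

variable [Nonempty ι]

theorem sum_inv_card_sq [CharZero K] :
    ∑ _i : ι, ((Fintype.card ι : K)⁻¹) ^ 2 = (Fintype.card ι : K)⁻¹ := by
  simp [sq]

theorem HasUniformMarginals.sum_eq_one [CharZero K] {ρ : ι × κ → K}
    (hρ : HasUniformMarginals ρ) :
    ∑ i, ∑ j, ρ (i, j) = 1 := by
  simp [hρ.1]

theorem hasUniformMarginals_const [CharZero K] [Nonempty κ] :
    HasUniformMarginals fun _ : ι × κ => ((Fintype.card ι : K) * Fintype.card κ)⁻¹ := by
  constructor <;> intro <;> simp [field]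

protected theorem HasUniformMarginals.sum_pottsKernel_mul_pottsKernel_mul [CharZero K] [Nonempty κ]
    [DecidableEq ι] [DecidableEq κ] {ρ : ι × κ → K} (hρ : HasUniformMarginals ρ) (c d : K) :
    ∑ i₁, ∑ i₂, ∑ j₁, ∑ j₂,
        pottsKernel c i₁ i₂ * pottsKernel d j₁ j₂ * ρ (i₁, j₁) * ρ (i₂, j₂) =
      1 - c / Fintype.card ι - d / Fintype.card κ + c * d * ∑ i, ∑ j, ρ (i, j) ^ 2 := by
  rw [sum_pottsKernel_mul_pottsKernel_mul, hρ.sum_eq_one]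
  simp only [hρ.1, hρ.2, sum_inv_card_sq, one_pow, div_eq_mul_inv]

theorem HasUniformMarginals.sum_const_sq_lt_sum_sq [LinearOrder K] [IsStrictOrderedRing K]
    [Nonempty κ] {ρ : ι × κ → K} (hρ : HasUniformMarginals ρ)
    (hne : ρ ≠ fun _ => ((Fintype.card ι : K) * Fintype.card κ)⁻¹) :
    ∑ _i : ι, ∑ _j : κ, (((Fintype.card ι : K) * Fintype.card κ)⁻¹) ^ 2 <
      ∑ i, ∑ j, ρ (i, j) ^ 2 := by
  have sum_eq : ∑ p, ρ p = ∑ _p : ι × κ, ((Fintype.card ι : K) * Fintype.card κ)⁻¹ := by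
    rw [Fintype.sum_prod_type, Fintype.sum_prod_type, hρ.sum_eq_one,
      hasUniformMarginals_const.sum_eq_one]
  simpa only [Fintype.sum_prod_type] using sum_const_sq_lt_sum_sq_of_sum_eq sum_eq hne

end UniformMarginals

section Potts

variable {q : ℕ}

theorem pottsPsi_eq_pottsKernel (β : ℝ) : pottsPsi q β = pottsKernel (1 - Real.exp (-β)) := by
  ext s t
  by_cases h : s = t <;> simp [pottsPsi, pottsKernel, h]

theorem hasUniformMarginals_of_mem_RSet {ρ : Fin q × Fin q → ℝ} (hρ : ρ ∈ RSet q) :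
    HasUniformMarginals ρ := by
  simpa only [HasUniformMarginals, Fintype.card_fin] using hρ.2

variable [NeZero q]

theorem uniform_mem_RSet : (fun _ : Fin q × Fin q => ((q : ℝ) ^ 2)⁻¹) ∈ RSet q := by
  refine ⟨fun _ => by positivity, ?_⟩
  simpa only [HasUniformMarginals, Fintype.card_fin, ← sq] using
    hasUniformMarginals_const (ι := Fin q) (κ := Fin q) (K := ℝ)

theorem HasUniformMarginals.pottsPair_eq {ρ : Fin q × Fin q → ℝ} (hρ : HasUniformMarginals ρ)
    (β : ℝ) :
    pottsPair q β ρ =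
      1 - 2 * (1 - Real.exp (-β)) / q +
        (1 - Real.exp (-β)) ^ 2 * ∑ σ : Fin q, ∑ τ : Fin q, ρ (σ, τ) ^ 2 := by
  rw [pottsPair, pottsPsi_eq_pottsKernel, hρ.sum_pottsKernel_mul_pottsKernel_mul,
    Fintype.card_fin]
  ring

theorem HasUniformMarginals.pottsPair_uniform_lt {ρ : Fin q × Fin q → ℝ}
    (hρ : HasUniformMarginals ρ) (hne : ρ ≠ fun _ => ((q : ℝ) ^ 2)⁻¹) {β : ℝ} (hβ : β ≠ 0) :
    pottsPair q β (fun _ => ((q : ℝ) ^ 2)⁻¹) < pottsPair q β ρ := by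
  have deficit_ne_zero : 1 - Real.exp (-β) ≠ 0 :=
    sub_ne_zero.mpr (Ne.symm (by simpa using hβ))
  have sum_sq_lt :
      ∑ _σ : Fin q, ∑ _τ : Fin q, (((q : ℝ) ^ 2)⁻¹) ^ 2 < ∑ σ, ∑ τ, ρ (σ, τ) ^ 2 := by
    simpa only [Fintype.card_fin, ← sq] using
      hρ.sum_const_sq_lt_sum_sq (by simpa only [Fintype.card_fin, ← sq] using hne)
  rw [hρ.pottsPair_eq, (hasUniformMarginals_of_mem_RSet uniform_mem_RSet).pottsPair_eq]
  gcongr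

end Potts

theorem stmt15_general (q : ℕ) (hq : q ≠ 0) (β : ℝ) (hβ : β ≠ 0) :
    (∀ ρ : Fin q × Fin q → ℝ, HasUniformMarginals ρ →
      pottsPair q β ρ =
        1 - 2 * (1 - Real.exp (-β)) / q +
          (1 - Real.exp (-β)) ^ 2 * ∑ σ : Fin q, ∑ τ : Fin q, ρ (σ, τ) ^ 2) ∧
    ((fun _ : Fin q × Fin q => ((q : ℝ) ^ 2)⁻¹) ∈ RSet q) ∧
    (∀ ρ : Fin q × Fin q → ℝ, HasUniformMarginals ρ → ρ ≠ (fun _ => ((q : ℝ) ^ 2)⁻¹) →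
      pottsPair q β (fun _ => ((q : ℝ) ^ 2)⁻¹) < pottsPair q β ρ) := by
  have : NeZero q := ⟨hq⟩
  exact ⟨fun _ hρ => hρ.pottsPair_eq β, uniform_mem_RSet,
    fun _ hρ hne => hρ.pottsPair_uniform_lt hne hβ⟩

/-- Lemma "Lemma_Potts", condition MIN for the Potts antiferromagnet:
for every `ρ ∈ R(Ω)` the pair functional equals
`1 - 2(1-e^{-β})/q + (1-e^{-β})²·Σ ρ²`, and consequently the uniform distribution `ρ̄` on
`Ω×Ω` is its unique global minimizer on `R(Ω)`. -/
theorem stmt15 (q : ℕ) (hq : 2 ≤ q) (β : ℝ) (hβ : 0 < β) :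
    (∀ ρ ∈ RSet q,
      pottsPair q β ρ =
        1 - 2 * (1 - Real.exp (-β)) / q +
          (1 - Real.exp (-β)) ^ 2 * ∑ σ : Fin q, ∑ τ : Fin q, ρ (σ, τ) ^ 2) ∧
    ((fun _ : Fin q × Fin q => ((q : ℝ) ^ 2)⁻¹) ∈ RSet q) ∧
    (∀ ρ ∈ RSet q, ρ ≠ (fun _ => ((q : ℝ) ^ 2)⁻¹) →
      pottsPair q β (fun _ => ((q : ℝ) ^ 2)⁻¹) < pottsPair q β ρ) := by
  obtain ⟨h_eq, h_mem, h_lt⟩ := stmt15_general q (by lia) β hβ.ne'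
  exact ⟨fun ρ hρ => h_eq ρ (hasUniformMarginals_of_mem_RSet hρ), h_mem,
    fun ρ hρ => h_lt ρ (hasUniformMarginals_of_mem_RSet hρ)⟩
end
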